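/- arXiv:2104.11898 — 4 statements merged into one kernel-verified Lean document; each statement's English description precedes it below -/
import Mathlib

section
/- Let d ≥ 3 and let η be a probability distribution on ℤ^d whose random walk is transient. Then for every finite set A ⊆ ℤ^d and every positive integer k, the η-capacity satisfies cap_η(A) ≥ (#A)/(k+1) − ( ∑_{x,y∈A} G_η(x,y) ) / (k(k+1)). -/
open MeasureTheory ProbabilityTheory
open scoped ENNReal

section Helpers

variable {d : ℕ} {Ω : Type} [MeasurableSpace Ω] {P : Measure Ω} [IsProbabilityMeasure P]
  {η : Measure (Fin d → ℤ)} [IsProbabilityMeasure η] {ξ : ℕ → Ω → (Fin d → ℤ)}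

lemma law_comp (hmeas : ∀ i, Measurable (ξ i))
    (hindep : iIndepFun ξ P) (hlaw : ∀ i, Measure.map (ξ i) P = η)
    (σ : ℕ → ℕ) (hσ : Function.Injective σ) (B : Set (ℕ → Fin d → ℤ)) (hB : MeasurableSet B) :
    P {ω | (fun i => ξ (σ i) ω) ∈ B} = P {ω | (fun i => ξ i ω) ∈ B} := by
  have h1 := (iIndepFun_iff_map_fun_eq_infinitePi_map hmeas).1 hindep
  have h2 := (iIndepFun_iff_map_fun_eq_infinitePi_map (fun i => hmeas (σ i))).1
    (hindep.precomp hσ)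
  simp only [hlaw] at h1 h2
  have e : Measure.map (fun ω i => ξ (σ i) ω) P = Measure.map (fun ω i => ξ i ω) P := by
    rw [h1]; exact h2
  have m1 : Measurable (fun ω i => ξ (σ i) ω) := measurable_pi_lambda _ fun i => hmeas _
  have m2 : Measurable (fun ω i => ξ i ω) := measurable_pi_lambda _ fun i => hmeas _
  have := congrArg (fun μ => μ B) e
  simp only [Measure.map_apply m1 hB, Measure.map_apply m2 hB] at this
  exact this

open Classical in
/-- visit counter up to time `m` of a path -/
noncomputable def vis (A : Finset (Fin d → ℤ)) (p : ℕ → (Fin d → ℤ)) (m : ℕ) : ℕ :=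
  ∑ i ∈ Finset.range m, if p i ∈ A then 1 else 0

lemma vis_meas {Ω' : Type*} (mΩ : MeasurableSpace Ω') (A : Finset (Fin d → ℤ))
    (p : ℕ → Ω' → (Fin d → ℤ)) (m : ℕ)
    (hp : ∀ i < m, Measurable (p i)) : Measurable (fun ω => vis A (fun i => p i ω) m) := by
  unfold vis
  refine Finset.measurable_sum _ fun i hi => ?_
  refine Measurable.ite ?_ measurable_const measurable_const
  exact hp i (Finset.mem_range.1 hi) A.measurableSet

lemma past_meas {Ω' : Type*} (mΩ : MeasurableSpace Ω') (A : Finset (Fin d → ℤ))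
    (u : ℕ → Ω' → (Fin d → ℤ)) (m k : ℕ) (x y : Fin d → ℤ)
    (hp : ∀ i < m, Measurable (u i)) :
    MeasurableSet {ω | x + ∑ j ∈ Finset.range m, u j ω = y ∧
      vis A (fun i => x + ∑ j ∈ Finset.range i, u j ω) (m+1) ≤ k} := by
  have hS : ∀ i < m + 1, Measurable (fun ω => x + ∑ j ∈ Finset.range i, u j ω) := by
    intro i hi
    refine Measurable.const_add ?_ x
    refine Finset.measurable_sum _ fun j hj => hp j ?_
    have := Finset.mem_range.1 hj
    omega
  refine MeasurableSet.inter ?_ ?_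
  · exact hS m (by omega) (measurableSet_singleton y)
  · exact vis_meas mΩ A (fun i ω => x + ∑ j ∈ Finset.range i, u j ω) (m+1) hS
      (measurableSet_Iic (a := k))

lemma fut_meas {Ω' : Type*} (mΩ : MeasurableSpace Ω') (A : Finset (Fin d → ℤ))
    (u : ℕ → Ω' → (Fin d → ℤ)) (y : Fin d → ℤ)
    (hp : ∀ i, Measurable (u i)) :
    MeasurableSet {ω | ∀ r : ℕ, 1 ≤ r → y + ∑ j ∈ Finset.range r, u j ω ∉ A} := by
  simp only [Set.ofPred_forall]
  refine MeasurableSet.iInter fun r => MeasurableSet.iInter fun _ => ?_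
  have : Measurable (fun ω => y + ∑ j ∈ Finset.range r, u j ω) :=
    Measurable.const_add (Finset.measurable_sum _ fun j _ => hp j) y
  exact (this A.measurableSet).compl

lemma markov_split (hmeas : ∀ i, Measurable (ξ i))
    (hindep : iIndepFun ξ P) (hlaw : ∀ i, Measure.map (ξ i) P = η)
    (A : Finset (Fin d → ℤ)) (m k : ℕ) (x y : Fin d → ℤ) :
    P ({ω | x + ∑ j ∈ Finset.range m, ξ j ω = y ∧
      vis A (fun i => x + ∑ j ∈ Finset.range i, ξ j ω) (m+1) ≤ k} ∩
      {ω | ∀ r : ℕ, 1 ≤ r → y + ∑ j ∈ Finset.range r, ξ (m + j) ω ∉ A}) =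
    P {ω | x + ∑ j ∈ Finset.range m, ξ j ω = y ∧
      vis A (fun i => x + ∑ j ∈ Finset.range i, ξ j ω) (m+1) ≤ k} *
    P {ω | ∀ r : ℕ, 1 ≤ r → y + ∑ j ∈ Finset.range r, ξ j ω ∉ A} := by
  have h := indep_iSup_of_disjoint (fun i => (hmeas i).comap_le) hindep
    (S := {i | i < m}) (T := {i | m ≤ i})
    (Set.disjoint_left.2 fun i (hi : i < m) (hi' : m ≤ i) => by omega)
  rw [Indep_iff] at h
  rw [h]
  · congr 1
    exact law_comp hmeas hindep hlaw (fun j => m + j) (fun a b hab => by simpa using hab)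
      {u | ∀ r : ℕ, 1 ≤ r → y + ∑ j ∈ Finset.range r, u j ∉ A}
      (fut_meas _ A (fun i (u : ℕ → Fin d → ℤ) => u i) y (fun i => measurable_pi_apply i))
  · refine past_meas _ A ξ m k x y fun i hi => ?_
    exact (comap_measurable (ξ i)).mono
      (le_iSup₂_of_le (f := fun i (_ : i ∈ {i | i < m}) => MeasurableSpace.comap (ξ i) _)
        i hi le_rfl) le_rfl
  · refine fut_meas _ A (fun j => ξ (m + j)) y fun i => ?_
    exact (comap_measurable (ξ (m+i))).mono
      (le_iSup₂_of_le (f := fun i (_ : i ∈ {i | m ≤ i}) => MeasurableSpace.comap (ξ i) _)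
        (m+i) (Nat.le_add_right m i) le_rfl) le_rfl

lemma vis_rev (A : Finset (Fin d → ℤ)) (p q : ℕ → (Fin d → ℤ)) (m : ℕ)
    (h : ∀ i ≤ m, p i = q (m - i)) : vis A p (m+1) = vis A q (m+1) := by
  unfold vis
  rw [← Finset.sum_range_reflect]
  refine Finset.sum_congr rfl fun i hi => ?_
  have := Finset.mem_range.1 hi
  rw [h _ (by omega)]
  congr 3
  omega

lemma reversal (hmeas : ∀ i, Measurable (ξ i))
    (hindep : iIndepFun ξ P) (hlaw : ∀ i, Measure.map (ξ i) P = η)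
    (A : Finset (Fin d → ℤ)) (m k : ℕ) (x y : Fin d → ℤ) :
    P {ω | x + ∑ j ∈ Finset.range m, ξ j ω = y ∧
      vis A (fun i => x + ∑ j ∈ Finset.range i, ξ j ω) (m+1) ≤ k} =
    P {ω | y - ∑ j ∈ Finset.range m, ξ j ω = x ∧
      vis A (fun i => y - ∑ j ∈ Finset.range i, ξ j ω) (m+1) ≤ k} := by
  let σ : ℕ → ℕ := fun i => if i < m then m - 1 - i else i
  have hσ : Function.Injective σ := by
    intro a b hab
    simp only [σ] at hab
    split_ifs at hab <;> omega
  have key := law_comp hmeas hindep hlaw σ hσ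
    {u | x + ∑ j ∈ Finset.range m, u j = y ∧
      vis A (fun i => x + ∑ j ∈ Finset.range i, u j) (m+1) ≤ k}
    (past_meas _ A (fun i (u : ℕ → Fin d → ℤ) => u i) m k x y (fun i _ => measurable_pi_apply i))
  simp only [Set.mem_ofPred_eq] at key
  rw [← key]
  congr 1
  ext ω
  simp only [Set.mem_ofPred_eq]
  have hs : ∀ i ≤ m, ∑ j ∈ Finset.range i, ξ (σ j) ω + ∑ j ∈ Finset.range (m - i), ξ j ω
      = ∑ j ∈ Finset.range m, ξ j ω := by
    intro i
    induction i with
    | zero => simp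
    | succ i ih =>
      intro hi
      rw [← ih (by omega), Finset.sum_range_succ, show m - i = (m - (i+1)) + 1 by omega,
        Finset.sum_range_succ]
      have : σ i = m - (i+1) := by simp only [σ]; rw [if_pos (by omega)]; omega
      rw [this]; abel
  have hm := hs m le_rfl
  simp only [Nat.sub_self, Finset.range_zero, Finset.sum_empty, add_zero] at hm
  rw [hm]
  have e1 : (x + ∑ j ∈ Finset.range m, ξ j ω = y) ↔ (y - ∑ j ∈ Finset.range m, ξ j ω = x) := by
    rw [sub_eq_iff_eq_add]; exact eq_comm
  rw [e1]
  refine and_congr_right fun hx => ?_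
  rw [vis_rev]
  intro i hi
  rw [← hx, ← hs i hi]; abel

open Classical in
lemma count_le (A : Finset (Fin d → ℤ)) (p : ℕ → (Fin d → ℤ)) (k n : ℕ) :
    (∑ m ∈ Finset.range n, if p m ∈ A ∧ vis A p (m+1) ≤ k then 1 else 0) ≤ min k (vis A p n) := by
  induction n with
  | zero => simp
  | succ n ih =>
    rw [Finset.sum_range_succ]
    have hv : vis A p (n+1) = vis A p n + if p n ∈ A then 1 else 0 := by
      unfold vis; exact Finset.sum_range_succ _ _
    split_ifs at hv ⊢ with h1 h2 h2 <;> grind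

lemma sum_rev_le (hmeas : ∀ i, Measurable (ξ i)) 
    (A : Finset (Fin d → ℤ)) (k : ℕ) (y : Fin d → ℤ) :
    ∑' m : ℕ, ∑ x ∈ A, P {ω | y - ∑ j ∈ Finset.range m, ξ j ω = x ∧
      vis A (fun i => y - ∑ j ∈ Finset.range i, ξ j ω) (m+1) ≤ k} ≤ k := by
  classical
  have hS : ∀ i, Measurable (fun ω => y - ∑ j ∈ Finset.range i, ξ j ω) := fun i =>
    Measurable.const_sub (Finset.measurable_sum _ fun j _ => hmeas j) y
  have hV : ∀ m, MeasurableSet {ω | vis A (fun i => y - ∑ j ∈ Finset.range i, ξ j ω) (m+1) ≤ k} :=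
    fun m => vis_meas _ A (fun i ω => y - ∑ j ∈ Finset.range i, ξ j ω) (m+1) (fun i _ => hS i)
      (measurableSet_Iic (a := k))
  have hE : ∀ m, MeasurableSet {ω | y - ∑ j ∈ Finset.range m, ξ j ω ∈ A ∧
      vis A (fun i => y - ∑ j ∈ Finset.range i, ξ j ω) (m+1) ≤ k} := fun m =>
    (hS m A.measurableSet).inter (hV m)
  have h1 : ∀ m, ∑ x ∈ A, P {ω | y - ∑ j ∈ Finset.range m, ξ j ω = x ∧
      vis A (fun i => y - ∑ j ∈ Finset.range i, ξ j ω) (m+1) ≤ k} =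
      ∫⁻ ω, (if y - ∑ j ∈ Finset.range m, ξ j ω ∈ A ∧
      vis A (fun i => y - ∑ j ∈ Finset.range i, ξ j ω) (m+1) ≤ k then 1 else 0) ∂P := by
    intro m
    have : ∫⁻ ω, (if y - ∑ j ∈ Finset.range m, ξ j ω ∈ A ∧
      vis A (fun i => y - ∑ j ∈ Finset.range i, ξ j ω) (m+1) ≤ k then (1:ℝ≥0∞) else 0) ∂P =
      P {ω | y - ∑ j ∈ Finset.range m, ξ j ω ∈ A ∧
      vis A (fun i => y - ∑ j ∈ Finset.range i, ξ j ω) (m+1) ≤ k} := by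
      rw [← lintegral_indicator_one (hE m)]
      refine lintegral_congr fun ω => ?_
      simp only [Set.indicator_apply, Set.mem_ofPred_eq, Pi.one_apply]
    rw [this, ← measure_biUnion_finset]
    · congr 1
      ext ω
      simp
    · intro a _ b _ hab
      refine Set.disjoint_left.2 ?_
      rintro ω ⟨h, _⟩ ⟨h', _⟩
      exact hab (h.symm.trans h')
    · intro x _
      exact (hS m (measurableSet_singleton x)).inter (hV m)
  simp_rw [h1]
  rw [← lintegral_tsum]
  · calc _ ≤ ∫⁻ _, (k : ℝ≥0∞) ∂P := by
          refine lintegral_mono fun ω => ?_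
          refine ENNReal.tsum_le_of_sum_range_le fun n => ?_
          have := (count_le A (fun i => y - ∑ j ∈ Finset.range i, ξ j ω) k n).trans
            (min_le_left _ _)
          exact_mod_cast this
      _ = k := by simp
  · intro m
    exact (Measurable.ite (hE m) measurable_const measurable_const).aemeasurable

lemma cover (A : Finset (Fin d → ℤ)) (k : ℕ) (u : ℕ → Fin d → ℤ) (x : Fin d → ℤ) (hx : x ∈ A)
    (h : ∀ n, vis A (fun i => x + ∑ j ∈ Finset.range i, u j) n ≤ k) :
    ∃ m, ∃ y ∈ A, (x + ∑ j ∈ Finset.range m, u j = y ∧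
      vis A (fun i => x + ∑ j ∈ Finset.range i, u j) (m+1) ≤ k) ∧
      ∀ r : ℕ, 1 ≤ r → y + ∑ j ∈ Finset.range r, u (m + j) ∉ A := by
  classical
  set p : ℕ → Fin d → ℤ := fun i => x + ∑ j ∈ Finset.range i, u j with hp
  have hv : ∀ n, vis A p (n+1) = vis A p n + if p n ∈ A then 1 else 0 := by
    intro n
    unfold vis; exact Finset.sum_range_succ _ _
  have hlast : ∃ m, p m ∈ A ∧ ∀ r, 1 ≤ r → p (m + r) ∉ A := by
    by_contra hcon
    push Not at hcon
    have : ∀ j, ∃ m, p m ∈ A ∧ j ≤ vis A p m := by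
      intro j
      induction j with
      | zero => exact ⟨0, by simpa [hp] using hx, Nat.zero_le _⟩
      | succ j ih =>
        obtain ⟨m, hm, hj⟩ := ih
        obtain ⟨r, hr, hmr⟩ := hcon m hm
        refine ⟨m + r, hmr, ?_⟩
        have h1 := hv m
        rw [if_pos hm] at h1
        have mono : Monotone (vis A p) := monotone_nat_of_le_succ fun n => by rw [hv n]; omega
        have := mono (show m + 1 ≤ m + r by omega)
        omega
    obtain ⟨m, _, hm⟩ := this (k+1)
    have := h m
    omega
  obtain ⟨m, hm, hr⟩ := hlast
  refine ⟨m, p m, hm, ⟨rfl, h _⟩, fun r h1 => ?_⟩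
  have := hr r h1
  simp only [hp] at this ⊢
  rwa [add_assoc, ← Finset.sum_range_add]

lemma many_visits (hmeas : ∀ i, Measurable (ξ i)) (A : Finset (Fin d → ℤ)) (k : ℕ)
    (x : Fin d → ℤ) :
    P {ω | ∃ n, k + 1 ≤ vis A (fun i => x + ∑ j ∈ Finset.range i, ξ j ω) n} ≤
    (∑ y ∈ A, ∑' m : ℕ, P {ω | x + ∑ j ∈ Finset.range m, ξ j ω = y}) / ((k : ℝ≥0∞) + 1) := by
  classical
  have hS : ∀ i, Measurable (fun ω => x + ∑ j ∈ Finset.range i, ξ j ω) := fun i =>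
    Measurable.const_add (Finset.measurable_sum _ fun j _ => hmeas j) x
  let f : ℕ → Ω → ℝ≥0∞ := fun m ω => if x + ∑ j ∈ Finset.range m, ξ j ω ∈ A then 1 else 0
  have hf : ∀ m, Measurable (f m) := fun m =>
    Measurable.ite (hS m A.measurableSet) measurable_const measurable_const
  have hint : ∫⁻ ω, ∑' m, f m ω ∂P =
      ∑ y ∈ A, ∑' m : ℕ, P {ω | x + ∑ j ∈ Finset.range m, ξ j ω = y} := by
    rw [lintegral_tsum fun m => (hf m).aemeasurable, ← Summable.tsum_finsetSum
      (fun _ _ => ENNReal.summable)]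
    refine tsum_congr fun m => ?_
    have : ∫⁻ ω, f m ω ∂P = P {ω | x + ∑ j ∈ Finset.range m, ξ j ω ∈ A} := by
      have hE : MeasurableSet {ω | x + ∑ j ∈ Finset.range m, ξ j ω ∈ A} := hS m A.measurableSet
      rw [← lintegral_indicator_one hE]
      refine lintegral_congr fun ω => ?_
      simp only [f, Set.indicator_apply, Set.mem_ofPred_eq, Pi.one_apply]
    rw [this, ← measure_biUnion_finset]
    · congr 1
      ext ω
      simp
    · intro a _ b _ hab
      refine Set.disjoint_left.2 ?_
      intro ω h h'
      exact hab (h.symm.trans h')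
    · intro y _
      exact hS m (measurableSet_singleton y)
  rw [← hint]
  refine le_trans (measure_mono ?_) (meas_ge_le_lintegral_div
    (Measurable.tsum hf).aemeasurable (by simp) (by simp))
  rintro ω ⟨n, hn⟩
  simp only [Set.mem_ofPred_eq]
  refine le_trans ?_ (ENNReal.sum_le_tsum (Finset.range n))
  have : ((k + 1 : ℕ) : ℝ≥0∞) ≤ _ := Nat.cast_le.2 hn
  simpa [vis, f] using this

end Helpers

/-- For a transient random walk on `ℤ^d` (`d ≥ 3`) with i.i.d. increments of
law `η`, every finite set `A ⊆ ℤ^d` and every positive integer `k`,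
`cap_η(A) ≥ #A/(k+1) − (∑_{x,y∈A} G(x,y))/(k(k+1))`. -/
theorem capacity_lower_bound_via_green
    (d : ℕ) (hd : 3 ≤ d)
    {Ω : Type} [MeasurableSpace Ω] (P : Measure Ω) [IsProbabilityMeasure P]
    (η : Measure (Fin d → ℤ)) [IsProbabilityMeasure η]
    (ξ : ℕ → Ω → (Fin d → ℤ))
    (hmeas : ∀ i, Measurable (ξ i))
    (hindep : iIndepFun ξ P)
    (hlaw : ∀ i, Measure.map (ξ i) P = η)
    (G : (Fin d → ℤ) → (Fin d → ℤ) → ℝ≥0∞)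
    (hG : ∀ x y, G x y = ∑' m : ℕ, P {ω | x + ∑ k ∈ Finset.range m, ξ k ω = y})
    (htrans : ∀ x y, G x y < ⊤)
    (A : Finset (Fin d → ℤ)) (k : ℕ) (hk : 1 ≤ k) :
    (A.card : ℝ≥0∞) / ((k : ℝ≥0∞) + 1) -
        (∑ x ∈ A, ∑ y ∈ A, G x y) / ((k : ℝ≥0∞) * ((k : ℝ≥0∞) + 1))
      ≤ ∑ x ∈ A,
          P {ω | ∀ m : ℕ, 1 ≤ m → x + ∑ j ∈ Finset.range m, ξ j ω ∉ A} := by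
  classical
  set e : (Fin d → ℤ) → ℝ≥0∞ := fun y =>
    P {ω | ∀ m : ℕ, 1 ≤ m → y + ∑ j ∈ Finset.range m, ξ j ω ∉ A} with he
  have step : ∀ x ∈ A, (1 : ℝ≥0∞) ≤ (∑ y ∈ A, G x y) / ((k : ℝ≥0∞) + 1) +
      ∑' m : ℕ, ∑ y ∈ A, P {ω | y - ∑ j ∈ Finset.range m, ξ j ω = x ∧
      vis A (fun i => y - ∑ j ∈ Finset.range i, ξ j ω) (m+1) ≤ k} * e y := by
    intro x hx
    have hsub : (Set.univ : Set Ω) ⊆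
      {ω | ∃ n, k + 1 ≤ vis A (fun i => x + ∑ j ∈ Finset.range i, ξ j ω) n} ∪
      ⋃ m : ℕ, ⋃ y ∈ A, ({ω | x + ∑ j ∈ Finset.range m, ξ j ω = y ∧
      vis A (fun i => x + ∑ j ∈ Finset.range i, ξ j ω) (m+1) ≤ k} ∩
      {ω | ∀ r : ℕ, 1 ≤ r → y + ∑ j ∈ Finset.range r, ξ (m + j) ω ∉ A}) := by
      intro ω _
      by_cases h : ∃ n, k + 1 ≤ vis A (fun i => x + ∑ j ∈ Finset.range i, ξ j ω) n
      · exact Or.inl h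
      · right
        push Not at h
        obtain ⟨m, y, hy, h1, h2⟩ := cover A k (fun i => ξ i ω) x hx
          (fun n => Nat.lt_succ_iff.1 (h n))
        simp only [Set.mem_iUnion]
        exact ⟨m, y, hy, h1, h2⟩
    calc (1 : ℝ≥0∞) = P Set.univ := measure_univ.symm
      _ ≤ _ := measure_mono hsub
      _ ≤ _ := measure_union_le _ _
      _ ≤ _ := by
        refine add_le_add ?_ ?_
        · simp_rw [hG]
          exact many_visits hmeas A k x
        · refine (measure_iUnion_le _).trans (ENNReal.tsum_le_tsum fun m => ?_)
          refine (measure_biUnion_finset_le _ _).trans (Finset.sum_le_sum fun y _ => ?_)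
          rw [markov_split hmeas hindep hlaw, reversal hmeas hindep hlaw]
  have total : (A.card : ℝ≥0∞) ≤ (∑ x ∈ A, ∑ y ∈ A, G x y) / ((k : ℝ≥0∞) + 1) +
      k * ∑ y ∈ A, e y := by
    calc (A.card : ℝ≥0∞) = ∑ x ∈ A, 1 := by simp
      _ ≤ _ := Finset.sum_le_sum step
      _ ≤ _ := by
        rw [Finset.sum_add_distrib]
        refine add_le_add ?_ ?_
        · simp only [div_eq_mul_inv, Finset.sum_mul]; exact le_rfl
        · rw [← Summable.tsum_finsetSum (fun _ _ => ENNReal.summable)]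
          rw [tsum_congr fun m => Finset.sum_comm]
          rw [Summable.tsum_finsetSum (fun _ _ => ENNReal.summable), Finset.mul_sum]
          refine Finset.sum_le_sum fun y _ => ?_
          simp_rw [← Finset.sum_mul]
          rw [ENNReal.tsum_mul_right]
          exact mul_le_mul_left (sum_rev_le hmeas A k y) _
  rw [tsub_le_iff_right]
  have hk0 : (k : ℝ≥0∞) ≠ 0 := by simp; omega
  have hk1 : (k : ℝ≥0∞) + 1 ≠ 0 := by simp
  have hkt : (k : ℝ≥0∞) + 1 ≠ ⊤ := by simp
  rw [ENNReal.div_le_iff hk1 hkt]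
  refine total.trans ?_
  generalize (∑ x ∈ A, ∑ y ∈ A, G x y) = T
  generalize (∑ y ∈ A, e y) = c
  have h1 : T / ((k : ℝ≥0∞) * (k + 1)) * (k + 1) = T / k := by
    rw [div_eq_mul_inv, ENNReal.mul_inv (Or.inl hk0) (Or.inl (by simp)), mul_assoc, mul_assoc,
      ENNReal.inv_mul_cancel hk1 hkt, mul_one, div_eq_mul_inv]
  rw [add_mul, h1, add_comm, mul_comm c]
  refine add_le_add (mul_le_mul_left le_self_add _) ?_
  exact ENNReal.div_le_div_left le_self_add _
end

section
/- Let (Y_n)_{n≥0} be the left-continuous random walk with Y_0 = 0 and i.i.d. increments ξ_i satisfying ξ_1 ≥ −1 almost surely, E[ξ_1] = 0, E[ξ_1²] < ∞ and P(ξ_1 = 0) < 1. For n ≥ 1 let T_n := inf{ k ≥ 1 : Y_k = −n }. Then almost surely T_n = n^{2+o(1)} as n → ∞; that is, almost surely, for every ε > 0, n^{2−ε} ≤ T_n ≤ n^{2+ε} for all sufficiently large n. (Via the Łukasiewicz encoding, T_n equals the total number of vertices of the first n trees of a forest of i.i.d. critical Galton–Watson trees with offspring law μ(k) = P(ξ_1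 = k−1), so this is the content of Lemma 2.1 of the paper.) -/
open MeasureTheory ProbabilityTheory
open scoped ENNReal

lemma exp_upper_aux {t : ℝ} (ht : t ≤ 1) : Real.exp t ≤ 1 + t + t ^ 2 := by
  by_cases h : -1 ≤ t
  · have := Real.abs_exp_sub_one_sub_id_le (abs_le.2 ⟨h, ht⟩)
    have := (abs_le.1 this).2
    linarith
  · push Not at h
    have : Real.exp t ≤ 1 := Real.exp_le_one_iff.2 (by linarith)
    nlinarith

/-- The functional on sequences. -/
noncomputable def Gfun (a l r : ℝ) (k : ℕ) (x : ℕ → ℝ) : ℝ :=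
  Set.indicator {x : ℕ → ℝ | ∀ j ≤ k, -a < ∑ i ∈ Finset.range j, x i}
    (fun x => r ^ k * Real.exp (-l * ∑ i ∈ Finset.range k, x i)) x

lemma Gset_meas (a : ℝ) (k : ℕ) :
    MeasurableSet {x : ℕ → ℝ | ∀ j ≤ k, -a < ∑ i ∈ Finset.range j, x i} := by
  have : {x : ℕ → ℝ | ∀ j ≤ k, -a < ∑ i ∈ Finset.range j, x i}
      = ⋂ j, ⋂ (_ : j ≤ k), {x : ℕ → ℝ | -a < ∑ i ∈ Finset.range j, x i} := by
    ext x; simp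
  rw [this]
  refine MeasurableSet.iInter fun j => MeasurableSet.iInter fun _ => ?_
  exact measurableSet_lt (by fun_prop) (by fun_prop)

lemma Gfun_meas (a l r : ℝ) (k : ℕ) : Measurable (Gfun a l r k) := by
  unfold Gfun
  exact Measurable.indicator (by fun_prop) (Gset_meas a k)

lemma Gfun_congr (a l r : ℝ) (k : ℕ) (x y : ℕ → ℝ) (h : ∀ i < k, x i = y i) :
    Gfun a l r k x = Gfun a l r k y := by
  have hs : ∀ j ≤ k, ∑ i ∈ Finset.range j, x i = ∑ i ∈ Finset.range j, y i := by
    intro j hj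
    exact Finset.sum_congr rfl fun i hi => h i (by have := Finset.mem_range.1 hi; omega)
  unfold Gfun
  have hm : (x ∈ {x : ℕ → ℝ | ∀ j ≤ k, -a < ∑ i ∈ Finset.range j, x i}) ↔
      (y ∈ {x : ℕ → ℝ | ∀ j ≤ k, -a < ∑ i ∈ Finset.range j, x i}) := by
    simp only [Set.mem_ofPred_eq]
    exact forall₂_congr fun j hj => by rw [hs j hj]
  by_cases hx : x ∈ {x : ℕ → ℝ | ∀ j ≤ k, -a < ∑ i ∈ Finset.range j, x i}
  · rw [Set.indicator_of_mem hx, Set.indicator_of_mem (hm.1 hx), hs k le_rfl]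
  · rw [Set.indicator_of_notMem hx, Set.indicator_of_notMem (fun h => hx (hm.2 h))]

lemma Gfun_nonneg (a l r : ℝ) (hr : 0 ≤ r) (k : ℕ) (x : ℕ → ℝ) : 0 ≤ Gfun a l r k x := by
  unfold Gfun
  exact Set.indicator_nonneg (fun x _ => by positivity) x

lemma Gfun_le (a l r : ℝ) (hl : 0 ≤ l) (hr : 0 ≤ r) (k : ℕ) (x : ℕ → ℝ) :
    Gfun a l r k x ≤ Set.indicator {x : ℕ → ℝ | ∀ j ≤ k, -a < ∑ i ∈ Finset.range j, x i}
      (fun _ => r ^ k * Real.exp (l * (a + 1))) x := by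
  unfold Gfun
  apply Set.indicator_le_indicator'
  intro hx
  have := hx k le_rfl
  refine mul_le_mul_of_nonneg_left (Real.exp_le_exp.2 ?_) (by positivity)
  nlinarith

lemma Gfun_indep {Ω : Type} [MeasurableSpace Ω] (P : Measure Ω)
    (X : ℕ → Ω → ℝ) (hmeas : ∀ i, Measurable (X i)) (hindep : iIndepFun X P)
    (a l r : ℝ) (k : ℕ) (s : ℝ) :
    IndepFun (fun ω => Gfun a l r k (fun i => X i ω)) (fun ω => s * Real.exp (-l * X k ω)) P := by
  have h := hindep.indepFun_finset (Finset.range k) {k} (by simp) hmeas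
  let e : ((i : Finset.range k) → ℝ) → (ℕ → ℝ) :=
    fun v i => if h : i ∈ Finset.range k then v ⟨i, h⟩ else 0
  have he : Measurable e := by
    refine measurable_pi_lambda _ fun i => ?_
    by_cases h : i ∈ Finset.range k
    · simp only [e, h, dite_true]; fun_prop
    · simp only [e, h, dite_false]; fun_prop
  have h2 := h.comp (φ := fun v => Gfun a l r k (e v))
    (ψ := fun v : (({k} : Finset ℕ) → ℝ) => s * Real.exp (-l * v ⟨k, by simp⟩))
    ((Gfun_meas a l r k).comp he) (by fun_prop)
  have e1 : (fun ω => Gfun a l r k (fun i => X i ω)) =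
      (fun v => Gfun a l r k (e v)) ∘ fun ω (i : Finset.range k) => X i ω := by
    ext ω
    simp only [Function.comp]
    apply Gfun_congr
    intro i hi
    simp [e, hi]
  rw [e1]
  exact h2

lemma hit_upper {Ω : Type} [MeasurableSpace Ω] (P : Measure Ω) [IsProbabilityMeasure P]
    (X : ℕ → Ω → ℝ) (hmeas : ∀ i, Measurable (X i)) (hindep : iIndepFun X P)
    (hge : ∀ i, ∀ᵐ ω ∂P, -1 ≤ X i ω) (a l r : ℝ) (ha : 0 < a) (hl : 0 ≤ l) (hr0 : 0 < r)
    (hr1 : r ≤ 1) (hr : ∀ i, 1 ≤ r * ∫ ω, Real.exp (-l * X i ω) ∂P) (k : ℕ) :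
    P.real {ω | ∀ j ≤ k, -a < ∑ i ∈ Finset.range j, X i ω} * (1 - r ^ k) ≤ l * (a + 1) := by
  set A : ℕ → Set Ω := fun k => {ω | ∀ j ≤ k, -a < ∑ i ∈ Finset.range j, X i ω} with hA
  have hXm : Measurable (fun ω => (fun i => X i ω : ℕ → ℝ)) := measurable_pi_lambda _ hmeas
  have hAm : ∀ k, MeasurableSet (A k) := fun k => (Gset_meas a k).preimage hXm
  set f : ℕ → Ω → ℝ := fun k ω => Gfun a l r k (fun i => X i ω) with hf
  have hfm : ∀ k, Measurable (f k) := fun k => (Gfun_meas a l r k).comp hXm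
  have hf0 : ∀ k ω, 0 ≤ f k ω := fun k ω => Gfun_nonneg a l r hr0.le k _
  have hfle : ∀ k ω, f k ω ≤ (A k).indicator (fun _ => r ^ k * Real.exp (l * (a + 1))) ω :=
    fun k ω => Gfun_le a l r hl hr0.le k _
  have hfle' : ∀ k ω, f k ω ≤ Real.exp (l * (a + 1)) := by
    intro k ω
    refine (hfle k ω).trans ?_
    refine Set.indicator_le' (s := A k) (g := fun _ => Real.exp (l * (a + 1))) ?_ ?_ ω
    · intro _ _
      exact mul_le_of_le_one_left (by positivity) (pow_le_one₀ hr0.le hr1)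
    · intro _ _; positivity
  have hfi : ∀ k, Integrable (f k) P := fun k =>
    Integrable.of_bound (hfm k).aestronglyMeasurable (Real.exp (l * (a + 1)))
      (ae_of_all _ fun ω => by rw [Real.norm_of_nonneg (hf0 k ω)]; exact hfle' k ω)
  have hanti : ∀ k, A (k + 1) ⊆ A k := fun k ω h j hj => h j (by omega)
  have key : ∀ k, 1 ≤ ∫ ω, f k ω ∂P + Real.exp (l * (a + 1)) * (1 - P.real (A k)) := by
    intro k
    induction k with
    | zero =>
      have h0 : A 0 = Set.univ := by
        ext ω; simp [hA, ha]
      have hf00 : ∀ ω, f 0 ω = 1 := by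
        intro ω; simp [hf, Gfun, ha]
      simp [h0, hf00]
    | succ k ih =>
      have h1 : ∫ ω, f k ω * (r * Real.exp (-l * X k ω)) ∂P
          = (∫ ω, f k ω ∂P) * ∫ ω, r * Real.exp (-l * X k ω) ∂P := by
        refine (Gfun_indep P X hmeas hindep a l r k r).integral_fun_mul_eq_mul_integral
          (hfm k).aestronglyMeasurable ?_
        have := hmeas k
        exact Measurable.aestronglyMeasurable (by fun_prop)
      rw [integral_const_mul] at h1
      have h2 : ∫ ω, f k ω ∂P ≤ ∫ ω, f k ω * (r * Real.exp (-l * X k ω)) ∂P := by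
        rw [h1]
        exact le_mul_of_one_le_right (integral_nonneg (hf0 k)) (hr k)
      have hi1 : ∀ s : Set Ω, MeasurableSet s →
          Integrable (s.indicator (fun _ => Real.exp (l * (a + 1)))) P :=
        fun s hs => (integrable_const _).indicator hs
      have h3 : ∫ ω, f k ω * (r * Real.exp (-l * X k ω)) ∂P ≤
          ∫ ω, (f (k + 1) ω + (A k \ A (k + 1)).indicator (fun _ => Real.exp (l * (a + 1))) ω) ∂P := by
        refine integral_mono_of_nonneg (ae_of_all _ fun ω => ?_)
          ((hfi _).add (hi1 _ ((hAm _).diff (hAm _)))) ?_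
        · have := hf0 k ω
          show 0 ≤ f k ω * (r * Real.exp (-l * X k ω))
          positivity
        · filter_upwards [hge k] with ω hω
          by_cases hk : ω ∈ A k
          · have e1 : f k ω * (r * Real.exp (-l * X k ω)) =
                r ^ (k + 1) * Real.exp (-l * ∑ i ∈ Finset.range (k + 1), X i ω) := by
              have : f k ω = r ^ k * Real.exp (-l * ∑ i ∈ Finset.range k, X i ω) := by
                simp only [hf, Gfun]
                exact Set.indicator_of_mem (s := {x : ℕ → ℝ | ∀ j ≤ k, -a < ∑ i ∈ Finset.range j, x i}) hk _
              rw [this, Finset.sum_range_succ, mul_add, Real.exp_add]; ring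
            rw [e1]
            by_cases hk1 : ω ∈ A (k + 1)
            · have : f (k + 1) ω = r ^ (k + 1) * Real.exp (-l * ∑ i ∈ Finset.range (k + 1), X i ω) := by
                simp only [hf, Gfun]
                exact Set.indicator_of_mem (s := {x : ℕ → ℝ | ∀ j ≤ k + 1, -a < ∑ i ∈ Finset.range j, x i}) hk1 _
              rw [this, Set.indicator_of_notMem (fun h => h.2 hk1)]; simp
            · rw [Set.indicator_of_mem (s := A k \ A (k + 1)) ⟨hk, hk1⟩]
              have : r ^ (k + 1) * Real.exp (-l * ∑ i ∈ Finset.range (k + 1), X i ω)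
                  ≤ Real.exp (l * (a + 1)) := by
                refine (mul_le_of_le_one_left (by positivity) (pow_le_one₀ hr0.le hr1)).trans ?_
                apply Real.exp_le_exp.2
                rw [Finset.sum_range_succ]
                have := hk k le_rfl
                nlinarith
              linarith [hf0 (k + 1) ω]
          · have : f k ω = 0 := le_antisymm (by simpa [hk] using hfle k ω) (hf0 k ω)
            rw [this, zero_mul]
            exact add_nonneg (hf0 _ _) (Set.indicator_nonneg (fun _ _ => by positivity) _)
      rw [integral_add (hfi _) (hi1 _ ((hAm _).diff (hAm _))),
        integral_indicator_const _ ((hAm _).diff (hAm _)),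
        measureReal_sdiff (hanti k) (hAm _), smul_eq_mul] at h3
      nlinarith
  have h1 := key k
  have h2 : ∫ ω, f k ω ∂P ≤ P.real (A k) * (r ^ k * Real.exp (l * (a + 1))) := by
    have := integral_mono (hfi k) ((integrable_const (r ^ k * Real.exp (l * (a + 1)))).indicator (hAm k)) (hfle k)
    rwa [integral_indicator_const _ (hAm k), smul_eq_mul] at this
  have h3 : Real.exp (-(l * (a + 1))) ≤ 1 - P.real (A k) * (1 - r ^ k) := by
    have : 1 ≤ Real.exp (l * (a + 1)) * (1 - P.real (A k) * (1 - r ^ k)) := by nlinarith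
    rw [Real.exp_neg, inv_le_iff_one_le_mul₀ (Real.exp_pos _)]
    linarith
  have h4 := Real.add_one_le_exp (-(l * (a + 1)))
  linarith

lemma exp_integrable {Ω : Type} [MeasurableSpace Ω] (P : Measure Ω) [IsProbabilityMeasure P]
    (X : Ω → ℝ) (hmeas : Measurable X) (b : ℝ)
    (hge : ∀ᵐ ω ∂P, -b ≤ X ω) (l : ℝ) (hl : 0 ≤ l) :
    Integrable (fun ω => Real.exp (-l * X ω)) P := by
  refine Integrable.of_bound (Measurable.aestronglyMeasurable (by fun_prop)) (Real.exp (l * b)) ?_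
  filter_upwards [hge] with ω h
  rw [Real.norm_of_nonneg (by positivity)]
  apply Real.exp_le_exp.2
  nlinarith

lemma mgf_upper {Ω : Type} [MeasurableSpace Ω] (P : Measure Ω) [IsProbabilityMeasure P]
    (X : Ω → ℝ) (hmeas : Measurable X)
    (hge : ∀ᵐ ω ∂P, -1 ≤ X ω) (hmean : ∫ ω, X ω ∂P = 0)
    (hmom : Integrable (fun ω => X ω ^ 2) P) (l : ℝ) (hl : 0 ≤ l) (hl1 : l ≤ 1) :
    ∫ ω, Real.exp (-l * X ω) ∂P ≤ Real.exp (l ^ 2 * ∫ ω, X ω ^ 2 ∂P) := by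
  have hi : Integrable X P :=
    ((memLp_two_iff_integrable_sq hmeas.aestronglyMeasurable).2 hmom).integrable one_le_two
  have h1 : ∫ ω, Real.exp (-l * X ω) ∂P ≤ ∫ ω, (1 + (-l) * X ω + l ^ 2 * X ω ^ 2) ∂P := by
    refine integral_mono_ae (exp_integrable P X hmeas 1 hge l hl)
      (((integrable_const 1).add (hi.const_mul _)).add (hmom.const_mul _)) ?_
    filter_upwards [hge] with ω h
    have := exp_upper_aux (t := -l * X ω) (by nlinarith)
    show Real.exp (-l * X ω) ≤ 1 + (-l) * X ω + l ^ 2 * X ω ^ 2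
    nlinarith
  have hi2 : Integrable (fun ω => 1 + (-l) * X ω) P := (integrable_const 1).add (hi.const_mul _)
  rw [integral_add hi2 (hmom.const_mul _),
    integral_add (integrable_const 1) (hi.const_mul _), integral_const_mul, integral_const_mul,
    hmean] at h1
  simp only [integral_const, probReal_univ, smul_eq_mul, mul_one, mul_zero, add_zero] at h1
  linarith [Real.add_one_le_exp (l ^ 2 * ∫ ω, X ω ^ 2 ∂P)]

lemma mgf_lower {Ω : Type} [MeasurableSpace Ω] (P : Measure Ω) [IsProbabilityMeasure P]
    (ξ : Ω → ℤ) (hmeas : Measurable ξ)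
    (hge : ∀ᵐ ω ∂P, -1 ≤ ξ ω) (hmean : ∫ ω, (ξ ω : ℝ) ∂P = 0)
    (hmom : Integrable (fun ω => (ξ ω : ℝ) ^ 2) P) (hnd : P {ω | ξ ω = 0} < 1) :
    ∃ c : ℝ, 0 < c ∧ ∀ l : ℝ, 0 ≤ l → 1 + c * l ^ 2 ≤ ∫ ω, Real.exp (-l * ξ ω) ∂P := by
  have hmX : Measurable (fun ω => (ξ ω : ℝ)) := by fun_prop
  have hi : Integrable (fun ω => (ξ ω : ℝ)) P :=
    ((memLp_two_iff_integrable_sq hmX.aestronglyMeasurable).2 hmom).integrable one_le_two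
  set B : Set Ω := {ω | ξ ω = -1} with hB
  have hBm : MeasurableSet B := hmeas (measurableSet_singleton (-1))
  have hp : 0 < P.real B := by
    by_contra hcon
    have h0 : P.real B = 0 := le_antisymm (not_lt.1 hcon) measureReal_nonneg
    have h0' : P B = 0 := (measureReal_eq_zero_iff (by finiteness)).1 h0
    have h1 : ∀ᵐ ω ∂P, ω ∉ B := measure_eq_zero_iff_ae_notMem.1 h0'
    have h2 : 0 ≤ᵐ[P] fun ω => (ξ ω : ℝ) := by
      filter_upwards [h1, hge] with ω h3 h4
      have h3' : ξ ω ≠ -1 := h3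
      have : 0 ≤ ξ ω := by omega
      show (0 : ℝ) ≤ (ξ ω : ℝ)
      exact_mod_cast this
    have h3 := (integral_eq_zero_iff_of_nonneg_ae h2 hi).1 hmean
    have h4 : P {ω | ξ ω = 0} = 1 := by
      have hm0 : MeasurableSet {ω | ξ ω = 0} := hmeas (measurableSet_singleton 0)
      rw [← prob_compl_eq_zero_iff hm0]
      rw [measure_eq_zero_iff_ae_notMem]
      filter_upwards [h3] with ω h
      have h' : (ξ ω : ℝ) = 0 := h
      simpa using h'
    exact absurd h4 hnd.ne
  refine ⟨P.real B / 2, by positivity, fun l hl => ?_⟩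
  have hge' : ∀ᵐ ω ∂P, (-1 : ℝ) ≤ (ξ ω : ℝ) := by
    filter_upwards [hge] with ω h
    exact_mod_cast h
  have hI : Integrable (B.indicator (fun _ => l ^ 2 / 2)) P := (integrable_const _).indicator hBm
  have h1 : ∫ ω, (1 + (-l) * (ξ ω : ℝ) + B.indicator (fun _ => l ^ 2 / 2) ω) ∂P
      ≤ ∫ ω, Real.exp (-l * ξ ω) ∂P := by
    refine integral_mono (((integrable_const 1).add (hi.const_mul _)).add hI)
      (exp_integrable P _ hmX 1 hge' l hl) ?_
    intro ω
    show 1 + (-l) * (ξ ω : ℝ) + B.indicator (fun _ => l ^ 2 / 2) ω ≤ Real.exp (-l * ξ ω)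
    by_cases h : ω ∈ B
    · have h' : ξ ω = -1 := h
      rw [Set.indicator_of_mem h, h']
      have := Real.quadratic_le_exp_of_nonneg hl
      have e : -l * ((-1 : ℤ) : ℝ) = l := by push_cast; ring
      rw [e]; exact this
    · rw [Set.indicator_of_notMem h]
      linarith [Real.add_one_le_exp (-l * (ξ ω : ℝ))]
  have hi2 : Integrable (fun ω => 1 + (-l) * (ξ ω : ℝ)) P :=
    (integrable_const 1).add (hi.const_mul _)
  rw [integral_add hi2 hI,
    integral_add (integrable_const 1) (hi.const_mul _), integral_const_mul,
    integral_indicator_const _ hBm, hmean] at h1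
  simp only [integral_const, probReal_univ, smul_eq_mul, mul_one, mul_zero, add_zero] at h1
  linarith

lemma chernoff {Ω : Type} [MeasurableSpace Ω] (P : Measure Ω) [IsProbabilityMeasure P]
    (X : ℕ → Ω → ℝ) (hmeas : ∀ i, Measurable (X i)) (hindep : iIndepFun X P)
    (hge : ∀ i, ∀ᵐ ω ∂P, -1 ≤ X i ω) (v l : ℝ) (hl : 0 ≤ l)
    (hu : ∀ i, ∫ ω, Real.exp (-l * X i ω) ∂P ≤ Real.exp (l ^ 2 * v)) (k : ℕ) (a : ℝ) :
    P.real {ω | ∑ i ∈ Finset.range k, X i ω ≤ -a} ≤ Real.exp (-(l * a) + k * (l ^ 2 * v)) := by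
  have hint : Integrable (fun ω => Real.exp (-l * (∑ i ∈ Finset.range k, X i) ω)) P := by
    refine exp_integrable P _ (by fun_prop) k ?_ l hl
    filter_upwards [ae_all_iff.2 hge] with ω h
    rw [Finset.sum_apply]
    have : ∑ i ∈ Finset.range k, (-1 : ℝ) ≤ ∑ i ∈ Finset.range k, X i ω :=
      Finset.sum_le_sum fun i _ => h i
    simpa using this
  have h := measure_le_le_exp_mul_mgf (-a) (neg_nonpos.2 hl) hint
  rw [hindep.mgf_sum hmeas] at h
  have h2 : ∏ i ∈ Finset.range k, mgf (X i) P (-l) ≤ Real.exp (l ^ 2 * v) ^ k := by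
    have h3 : ∏ i ∈ Finset.range k, mgf (X i) P (-l) ≤
        ∏ i ∈ Finset.range k, Real.exp (l ^ 2 * v) :=
      Finset.prod_le_prod (fun i _ => mgf_nonneg) (fun i _ => hu i)
    simpa using h3
  simp only [Finset.sum_apply] at h
  refine h.trans ((mul_le_mul_of_nonneg_left h2 (by positivity)).trans ?_)
  rw [← Real.exp_nat_mul, ← Real.exp_add]
  apply Real.exp_le_exp.2
  linarith

lemma bc_aux {Ω : Type} [MeasurableSpace Ω] (P : Measure Ω) [IsProbabilityMeasure P]
    (s : ℕ → Set Ω) (u : ℕ → ℝ) (hu : Summable u) (h : ∀ n, P.real (s n) ≤ u n) :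
    ∀ᵐ ω ∂P, ∀ᶠ n in Filter.atTop, ω ∉ s n := by
  apply ae_eventually_notMem
  have h1 : ∀ n, P (s n) ≤ ENNReal.ofReal (u n) := by
    intro n
    rw [← ofReal_measureReal (μ := P) (s := s n)]
    exact ENNReal.ofReal_le_ofReal (h n)
  refine ne_top_of_le_ne_top ?_ (ENNReal.tsum_le_tsum h1)
  exact hu.tsum_ofReal_ne_top

lemma skip_free (x : ℕ → ℤ) (hx : ∀ i, -1 ≤ x i) (K N n : ℕ) (hn : 1 ≤ n) (hnN : n ≤ N)
    (h : ∃ j ≤ K, ∑ i ∈ Finset.range j, x i ≤ -(N : ℤ)) :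
    ∃ k, 1 ≤ k ∧ k ≤ K ∧ ∑ i ∈ Finset.range k, x i = -(n : ℤ) := by
  classical
  obtain ⟨j, hjK, hj⟩ := h
  have hex : ∃ j, ∑ i ∈ Finset.range j, x i ≤ -(n : ℤ) := ⟨j, by omega⟩
  have hs := Nat.find_spec hex
  have hle : Nat.find hex ≤ j := Nat.find_min' hex (by omega)
  rcases hk : Nat.find hex with _ | k
  · rw [hk] at hs
    simp at hs
    omega
  · have hlt := Nat.find_min hex (m := k) (by omega)
    rw [hk, Finset.sum_range_succ] at hs
    refine ⟨k + 1, by omega, by omega, ?_⟩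
    rw [Finset.sum_range_succ]
    have := hx k
    omega

lemma lower_m {Ω : Type} [MeasurableSpace Ω] (P : Measure Ω) [IsProbabilityMeasure P]
    (X : ℕ → Ω → ℝ) (hmeas : ∀ i, Measurable (X i)) (hindep : iIndepFun X P)
    (hge : ∀ i, ∀ᵐ ω ∂P, -1 ≤ X i ω) (v : ℝ) (hv : 0 ≤ v)
    (hu : ∀ l : ℝ, 0 ≤ l → l ≤ 1 → ∀ i, ∫ ω, Real.exp (-l * X i ω) ∂P ≤ Real.exp (l ^ 2 * v))
    (m : ℕ) (hm : 1 ≤ m) :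
    ∀ᵐ ω ∂P, ∀ᶠ n : ℕ in Filter.atTop, ∀ k : ℕ, ∑ i ∈ Finset.range k, X i ω = -(n : ℝ) →
      (n : ℝ) ^ ((2 : ℝ) - 1 / m) ≤ k := by
  have hm0 : (1 : ℝ) ≤ m := by exact_mod_cast hm
  have hm1 : 1 / (m : ℝ) ≤ 1 := by rw [div_le_one (by linarith)]; exact hm0
  have hm2 : 0 < 1 / (m : ℝ) := by positivity
  let I : ℕ → Finset ℕ := fun n => (Finset.range (n ^ 2 + 1)).filter
    (fun k => (k : ℝ) < (n : ℝ) ^ ((2 : ℝ) - 1 / m) ∧ 1 ≤ n)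
  let F : ℕ → Set Ω := fun n => ⋃ k ∈ I n, {ω | ∑ i ∈ Finset.range k, X i ω ≤ -(n : ℝ)}
  have hF : ∀ n, P.real (F n) ≤ (Real.exp v * (8 * m).factorial * 2) * (1 / (n : ℝ) ^ 2) := by
    intro n
    rcases Nat.eq_zero_or_pos n with rfl | hn
    · simp [F, I]
    have hn1 : (1 : ℝ) ≤ n := by exact_mod_cast hn
    have hn0 : (0 : ℝ) < n := by linarith
    set d : ℝ := 1 / (2 * m) with hd
    have hdm : 1 / (m : ℝ) = 2 * d := by rw [hd]; field_simp
    set l : ℝ := (n : ℝ) ^ (-1 + d) with hl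
    have hl0 : 0 ≤ l := by positivity
    have hl1 : l ≤ 1 := Real.rpow_le_one_of_one_le_of_nonpos hn1 (by linarith)
    have hln : l * n = (n : ℝ) ^ d := by
      rw [hl, ← Real.rpow_add_one hn0.ne']; congr 1; ring
    have hb : ∀ k ∈ I n, P.real {ω | ∑ i ∈ Finset.range k, X i ω ≤ -(n : ℝ)}
        ≤ Real.exp v * ((8 * m).factorial / (n : ℝ) ^ 4) := by
      intro k hk
      have hk2 : (k : ℝ) < (n : ℝ) ^ ((2 : ℝ) - 1 / m) := (Finset.mem_filter.1 hk).2.1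
      refine (chernoff P X hmeas hindep hge v l hl0 (hu l hl0 hl1) k n).trans ?_
      have h1 : (k : ℝ) * l ^ 2 ≤ 1 := by
        have e : (n : ℝ) ^ ((2 : ℝ) - 1 / m) * l ^ 2 = 1 := by
          rw [hl, ← Real.rpow_natCast, ← Real.rpow_mul hn0.le, ← Real.rpow_add hn0, hdm]
          convert Real.rpow_zero (n : ℝ) using 2
          push_cast; ring
        rw [← e]; gcongr
      have h2 : ((n : ℝ) ^ d) ^ (8 * m) = (n : ℝ) ^ 4 := by
        rw [← Real.rpow_natCast, ← Real.rpow_mul hn0.le, ← Real.rpow_natCast]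
        congr 1
        rw [hd]; push_cast; field_simp; norm_num
      have h3 := Real.pow_div_factorial_le_exp ((n : ℝ) ^ d) (by positivity) (8 * m)
      rw [h2] at h3
      have h4 : Real.exp (-((n : ℝ) ^ d)) ≤ (8 * m).factorial / (n : ℝ) ^ 4 := by
        rw [Real.exp_neg, ← inv_div]
        exact inv_anti₀ (by positivity) h3
      rw [hln]
      calc Real.exp (-(n : ℝ) ^ d + k * (l ^ 2 * v))
          ≤ Real.exp (v + -(n : ℝ) ^ d) := by
            apply Real.exp_le_exp.2; nlinarith
        _ = Real.exp v * Real.exp (-((n : ℝ) ^ d)) := Real.exp_add _ _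
        _ ≤ _ := by gcongr
    refine (measureReal_biUnion_finset_le _ _).trans ((Finset.sum_le_card_nsmul _ _ _ hb).trans ?_)
    rw [nsmul_eq_mul]
    have hc : ((I n).card : ℝ) ≤ 2 * (n : ℝ) ^ 2 := by
      have h1 : (I n).card ≤ n ^ 2 + 1 := by
        refine (Finset.card_filter_le _ _).trans ?_
        simp
      have h2 : ((I n).card : ℝ) ≤ (n : ℝ) ^ 2 + 1 := by exact_mod_cast h1
      nlinarith
    calc ((I n).card : ℝ) * (Real.exp v * ((8 * m).factorial / (n : ℝ) ^ 4))
        ≤ 2 * (n : ℝ) ^ 2 * (Real.exp v * ((8 * m).factorial / (n : ℝ) ^ 4)) := by gcongr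
      _ = _ := by field_simp
  have hs : Summable fun n : ℕ => (Real.exp v * (8 * m).factorial * 2) * (1 / (n : ℝ) ^ 2) :=
    (Real.summable_one_div_nat_pow.2 (by norm_num)).mul_left _
  filter_upwards [bc_aux P F _ hs hF] with ω hω
  filter_upwards [hω, Filter.eventually_ge_atTop 1] with n hn hn1 k hk
  by_contra hcon
  push Not at hcon
  apply hn
  have hn1' : (1 : ℝ) ≤ n := by exact_mod_cast hn1
  have h2 : (n : ℝ) ^ ((2 : ℝ) - 1 / m) ≤ (n : ℝ) ^ 2 := by
    rw [← Real.rpow_natCast]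
    exact Real.rpow_le_rpow_of_exponent_le hn1' (by push_cast; linarith)
  have h3 : k < n ^ 2 + 1 := by
    have : (k : ℝ) < (n : ℝ) ^ 2 := by linarith
    have : k < n ^ 2 := by exact_mod_cast this
    omega
  simp only [F, I, Set.mem_iUnion]
  exact ⟨k, Finset.mem_filter.2 ⟨Finset.mem_range.2 h3, hcon, hn1⟩, hk.le⟩

lemma upper_m {Ω : Type} [MeasurableSpace Ω] (P : Measure Ω) [IsProbabilityMeasure P]
    (X : ℕ → Ω → ℝ) (hmeas : ∀ i, Measurable (X i)) (hindep : iIndepFun X P)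
    (hge : ∀ i, ∀ᵐ ω ∂P, -1 ≤ X i ω) (c : ℝ) (hc : 0 < c)
    (hl : ∀ l : ℝ, 0 ≤ l → ∀ i, 1 + c * l ^ 2 ≤ ∫ ω, Real.exp (-l * X i ω) ∂P)
    (m : ℕ) :
    ∀ᵐ ω ∂P, ∀ᶠ j : ℕ in Filter.atTop, ∃ i ≤ 4 ^ ((m + 1) * j),
      ∑ i ∈ Finset.range i, X i ω ≤ -((2 : ℝ) ^ (m * j)) := by
  let E : ℕ → Set Ω := fun j => {ω | ∀ i ≤ 4 ^ ((m + 1) * j),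
    -((2 : ℝ) ^ (m * j)) < ∑ i ∈ Finset.range i, X i ω}
  have hE : ∀ j, P.real (E j) ≤ ((1 + c) / c * 2) * (1 / 2) ^ j := by
    intro j
    set l : ℝ := (1 / 2) ^ ((m + 1) * j) with hld
    set K : ℕ := 4 ^ ((m + 1) * j) with hK
    have hl0 : 0 < l := by positivity
    have hKl : (K : ℝ) * l ^ 2 = 1 := by
      rw [hK, hld]; push_cast
      rw [← pow_mul (1 / 2 : ℝ), mul_comm ((m + 1) * j) 2, pow_mul (1 / 2 : ℝ), ← mul_pow]; norm_num
    have hpos : 0 < 1 + c * l ^ 2 := by positivity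
    have h1 := hit_upper P X hmeas hindep hge ((2 : ℝ) ^ (m * j)) l (1 + c * l ^ 2)⁻¹
      (by positivity) hl0.le (by positivity) (inv_le_one_of_one_le₀ (by nlinarith [sq_nonneg l]))
      (fun i => by
        rw [inv_mul_eq_div, le_div_iff₀ hpos, one_mul]
        exact hl l hl0.le i) K
    have h2 : ((1 + c * l ^ 2)⁻¹) ^ K ≤ (1 + c)⁻¹ := by
      rw [inv_pow]
      apply inv_anti₀ (by positivity)
      have := one_add_mul_le_pow (a := c * l ^ 2) (by nlinarith [sq_nonneg l]) K
      have e : (K : ℝ) * (c * l ^ 2) = c := by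
        rw [mul_left_comm, hKl, mul_one]
      rwa [e] at this
    have h3 : l * ((2 : ℝ) ^ (m * j) + 1) ≤ 2 * (1 / 2) ^ j := by
      have e1 : l * (2 : ℝ) ^ (m * j) = (1 / 2) ^ j := by
        rw [hld, add_mul, one_mul, pow_add, mul_right_comm, ← mul_pow]; norm_num
      have e2 : l ≤ (1 / 2) ^ j := by
        rw [← e1]
        exact le_mul_of_one_le_right hl0.le (one_le_pow₀ (by norm_num))
      linarith
    have h4 : P.real (E j) * (c / (1 + c)) ≤ 2 * (1 / 2) ^ j := by
      refine le_trans ?_ (h1.trans h3)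
      refine mul_le_mul_of_nonneg_left ?_ measureReal_nonneg
      have : c / (1 + c) = 1 - (1 + c)⁻¹ := by field_simp; ring
      linarith
    have h5 : P.real (E j) = P.real (E j) * (c / (1 + c)) * ((1 + c) / c) := by field_simp
    rw [h5]
    calc _ ≤ 2 * (1 / 2) ^ j * ((1 + c) / c) := by gcongr
      _ = _ := by ring
  have hs : Summable fun j : ℕ => ((1 + c) / c * 2) * (1 / 2 : ℝ) ^ j :=
    summable_geometric_two.mul_left _
  filter_upwards [bc_aux P E _ hs hE] with ω hω
  filter_upwards [hω] with j hj
  simp only [E, Set.mem_ofPred_eq] at hj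
  push Not at hj
  exact hj

theorem hitting_time_of_left_continuous_walk
    {Ω : Type} [MeasurableSpace Ω] (P : Measure Ω) [IsProbabilityMeasure P]
    (ξ : ℕ → Ω → ℤ)
    (hmeas : ∀ i, Measurable (ξ i))
    (hindep : iIndepFun ξ P)
    (hident : ∀ i, Measure.map (ξ i) P = Measure.map (ξ 0) P)
    (hge : ∀ᵐ ω ∂P, -1 ≤ ξ 0 ω)
    (hmean : ∫ ω, (ξ 0 ω : ℝ) ∂P = 0)
    (hmom : Integrable (fun ω => ((ξ 0 ω : ℝ)) ^ 2) P)
    (hnd : P {ω | ξ 0 ω = 0} < 1)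
    (T : ℕ → Ω → ℕ)
    (hT : ∀ n ω, T n ω = sInf {k : ℕ | 1 ≤ k ∧ ∑ i ∈ Finset.range k, ξ i ω = -(n : ℤ)}) :
    ∀ᵐ ω ∂P, ∀ ε : ℝ, 0 < ε → ∀ᶠ n : ℕ in Filter.atTop,
      (n : ℝ) ^ ((2 : ℝ) - ε) ≤ (T n ω : ℝ) ∧ (T n ω : ℝ) ≤ (n : ℝ) ^ ((2 : ℝ) + ε) := by
  have hid : ∀ i, IdentDistrib (ξ i) (ξ 0) P P := fun i =>
    ⟨(hmeas i).aemeasurable, (hmeas 0).aemeasurable, hident i⟩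
  have hgeZ : ∀ i, ∀ᵐ ω ∂P, -1 ≤ ξ i ω := fun i =>
    (hid i).symm.ae_snd (p := fun z : ℤ => -1 ≤ z) (MeasurableSet.of_discrete) hge
  let X : ℕ → Ω → ℝ := fun i ω => (ξ i ω : ℝ)
  have hXm : ∀ i, Measurable (X i) := fun i => by
    have := hmeas i
    fun_prop
  have hXi : iIndepFun X P := hindep.comp (fun _ (z : ℤ) => (z : ℝ)) (fun _ => by fun_prop)
  have hXge : ∀ i, ∀ᵐ ω ∂P, -1 ≤ X i ω := fun i => by
    filter_upwards [hgeZ i] with ω h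
    show (-1 : ℝ) ≤ (ξ i ω : ℝ)
    exact_mod_cast h
  have hmgf : ∀ l i, ∫ ω, Real.exp (-l * X i ω) ∂P = ∫ ω, Real.exp (-l * X 0 ω) ∂P := fun l i =>
    ((hid i).comp (u := fun z : ℤ => Real.exp (-l * z)) (by fun_prop)).integral_eq
  obtain ⟨c, hc, hlow⟩ := mgf_lower P (ξ 0) (hmeas 0) hge hmean hmom hnd
  have hL : ∀ m : ℕ, ∀ᵐ ω ∂P, ∀ᶠ n : ℕ in Filter.atTop, ∀ k : ℕ,
      ∑ i ∈ Finset.range k, X i ω = -(n : ℝ) → (n : ℝ) ^ ((2 : ℝ) - 1 / (m + 1 : ℕ)) ≤ k :=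
    fun m => lower_m P X hXm hXi hXge (∫ ω, X 0 ω ^ 2 ∂P) (integral_nonneg fun _ => sq_nonneg _)
      (fun l h0 h1 i => by
        rw [hmgf]; exact mgf_upper P (X 0) (hXm 0) (hXge 0) hmean hmom l h0 h1) (m + 1) (by omega)
  have hU := fun m : ℕ => upper_m P X hXm hXi hXge c hc
    (fun l h0 i => by rw [hmgf]; exact hlow l h0) (m + 1)
  filter_upwards [ae_all_iff.2 hL, ae_all_iff.2 hU, ae_all_iff.2 hgeZ] with ω h1 h2 h3 ε hε
  obtain ⟨m, hm⟩ := exists_nat_one_div_lt (half_pos hε)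
  set M : ℕ := m + 1 with hM
  have hM1 : 1 / (M : ℝ) < ε / 2 := by rw [hM]; push_cast; exact hm
  have hM0 : (0 : ℝ) < M := by rw [hM]; positivity
  have hM2 : 2 / (M : ℝ) < ε := by
    have : 2 / (M : ℝ) = 2 * (1 / M) := by ring
    linarith
  have h1 := h1 m
  have h2 := h2 m
  rw [Filter.eventually_atTop] at h2
  obtain ⟨J, hJ⟩ := h2
  have hbig : ∀ᶠ n : ℕ in Filter.atTop, (4 : ℝ) ^ (M + 1) ≤ (n : ℝ) ^ (ε - 2 / M) :=
    ((tendsto_rpow_atTop (by linarith)).comp tendsto_natCast_atTop_atTop).eventually_ge_atTop _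
  filter_upwards [h1, hbig, Filter.eventually_ge_atTop ((2 ^ M) ^ J), Filter.eventually_ge_atTop 1]
    with n hn1 hn2 hn3 hn4
  have hn4' : (1 : ℝ) ≤ n := by exact_mod_cast hn4
  have hn0 : (0 : ℝ) < n := by linarith
  have hb : 1 < 2 ^ M := Nat.one_lt_two_pow (by omega)
  set j := Nat.log (2 ^ M) n with hj
  have hjJ : J ≤ j := Nat.le_log_of_pow_le hb hn3
  have hj1 : (2 ^ M) ^ j ≤ n := Nat.pow_log_le_self _ (by omega)
  have hj2 : n < (2 ^ M) ^ (j + 1) := Nat.lt_pow_succ_log_self hb n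
  obtain ⟨i, hiK, hi⟩ := hJ (j + 1) (by omega)
  have hi' : ∑ i ∈ Finset.range i, ξ i ω ≤ -((2 ^ (M * (j + 1)) : ℕ) : ℤ) := by
    have : ((∑ i ∈ Finset.range i, ξ i ω : ℤ) : ℝ) ≤ ((-((2 ^ (M * (j + 1)) : ℕ) : ℤ) : ℤ) : ℝ) := by
      push_cast; exact hi
    exact_mod_cast this
  obtain ⟨k, hk1, hkK, hk⟩ := skip_free (fun i => ξ i ω) h3 (4 ^ ((M + 1) * (j + 1)))
    (2 ^ (M * (j + 1))) n hn4 (by rw [pow_mul]; exact hj2.le) ⟨i, hiK, hi'⟩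
  have hTmem : T n ω ∈ {k : ℕ | 1 ≤ k ∧ ∑ i ∈ Finset.range k, ξ i ω = -(n : ℤ)} := by
    rw [hT]; exact Nat.sInf_mem ⟨k, hk1, hk⟩
  have hTle : T n ω ≤ k := by rw [hT]; exact Nat.sInf_le ⟨hk1, hk⟩
  constructor
  · have hs : ∑ i ∈ Finset.range (T n ω), X i ω = -(n : ℝ) := by
      have := hTmem.2
      have h : ((∑ i ∈ Finset.range (T n ω), ξ i ω : ℤ) : ℝ) = ((-(n : ℤ) : ℤ) : ℝ) := by rw [this]
      push_cast at h; exact h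
    refine le_trans ?_ (hn1 _ hs)
    exact Real.rpow_le_rpow_of_exponent_le hn4' (by linarith)
  · have e1 : ((4 : ℝ) ^ ((M + 1) * j)) = (((2 : ℝ) ^ M) ^ j) ^ ((2 : ℝ) + 2 / M) := by
      rw [← pow_mul, ← Real.rpow_natCast 2, ← Real.rpow_mul (by norm_num),
        show (4 : ℝ) = 2 ^ (2 : ℝ) by norm_num, ← Real.rpow_natCast, ← Real.rpow_mul (by norm_num)]
      congr 1
      push_cast; field_simp
    have hj1' : ((2 : ℝ) ^ M) ^ j ≤ n := by exact_mod_cast hj1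
    calc (T n ω : ℝ) ≤ ((4 ^ ((M + 1) * (j + 1)) : ℕ) : ℝ) := by exact_mod_cast hTle.trans hkK
      _ = 4 ^ (M + 1) * 4 ^ ((M + 1) * j) := by push_cast; rw [← pow_add]; congr 1; ring
      _ ≤ (n : ℝ) ^ (ε - 2 / M) * (n : ℝ) ^ ((2 : ℝ) + 2 / M) := by
        rw [e1]; gcongr
      _ = (n : ℝ) ^ (2 + ε) := by rw [← Real.rpow_add hn0]; congr 1; ring
end

section
/- Let (Y_n)_{n≥0} be a random walk on ℤ with Y_0 = 0 and i.i.d. increments, and for n ≥ 1 define the height process H_n := ∑_{k=0}^{n−1} 1{ Y_k = min_{k≤j≤n} Y_j }. Then for each fixed n, H_n has the same distribution as the number of weak ascending records N_n := #{ 1 ≤ k ≤ n : Y_k = max_{0≤j≤k} Y_j }. -/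
open MeasureTheory ProbabilityTheory
open scoped ENNReal


lemma rev_sum_aux (n : ℕ) (a : ℕ → ℤ) (m : ℕ) (hm : m ≤ n) :
    ∑ i ∈ Finset.range m, a (n - 1 - i)
      = ∑ i ∈ Finset.range n, a i - ∑ i ∈ Finset.range (n - m), a i := by
  induction m with
  | zero => simp
  | succ m ih =>
    rw [Finset.sum_range_succ, ih (by omega)]
    have h : n - m = (n - (m + 1)) + 1 := by omega
    rw [h, Finset.sum_range_succ]
    have h2 : n - 1 - m = n - (m + 1) := by omega
    rw [h2]; ring

/-- Number of weak ascending records of the walk with increments `a`. -/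
def recCount (n : ℕ) (a : ℕ → ℤ) : ℕ :=
  ∑ k ∈ Finset.Icc 1 n,
    @ite ℕ (∀ j ∈ Finset.Icc 0 k, ∑ i ∈ Finset.range j, a i ≤ ∑ i ∈ Finset.range k, a i)
      Finset.decidableDforallFinset 1 0

lemma height_eq_rec (n : ℕ) (a : ℕ → ℤ) :
    ∑ k ∈ Finset.range n,
      @ite ℕ (∀ j ∈ Finset.Icc k n, ∑ i ∈ Finset.range k, a i ≤ ∑ i ∈ Finset.range j, a i)
        Finset.decidableDforallFinset 1 0 = recCount n (fun i => a (n - 1 - i)) := by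
  unfold recCount
  refine Finset.sum_bij' (fun k _ => n - k) (fun k _ => n - k) ?_ ?_ ?_ ?_ ?_
  · intro k hk; simp only [Finset.mem_range, Finset.mem_Icc] at *; omega
  · intro k hk; simp only [Finset.mem_range, Finset.mem_Icc] at *; omega
  · intro k hk; simp only [Finset.mem_range] at *; omega
  · intro k hk; simp only [Finset.mem_Icc] at *; omega
  · intro k hk
    simp only [Finset.mem_range] at hk
    refine if_congr ?_ rfl rfl
    simp only [Finset.mem_Icc]
    constructor
    · intro h j hj
      rw [rev_sum_aux n a j (by omega), rev_sum_aux n a (n - k) (by omega)]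
      have := h (n - j) (by omega)
      rw [show n - (n - k) = k by omega]
      linarith
    · intro h j hj
      have := h (n - j) (by omega)
      rw [rev_sum_aux n a (n - j) (by omega), rev_sum_aux n a (n - k) (by omega),
        show n - (n - k) = k by omega, show n - (n - j) = j by omega] at this
      linarith

lemma recCount_congr (n : ℕ) (a b : ℕ → ℤ) (h : ∀ i < n, a i = b i) :
    recCount n a = recCount n b := by
  have hs : ∀ k ≤ n, ∑ i ∈ Finset.range k, a i = ∑ i ∈ Finset.range k, b i := fun k hk =>
    Finset.sum_congr rfl fun i hi => h i (by simp only [Finset.mem_range] at hi; omega)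
  unfold recCount
  refine Finset.sum_congr rfl fun k hk => if_congr ?_ rfl rfl
  simp only [Finset.mem_Icc] at *
  refine forall₂_congr fun j hj => ?_
  rw [hs j (by omega), hs k (by omega)]

/-- Extension by zero. -/
def extZ (n : ℕ) (x : Fin n → ℤ) : ℕ → ℤ := fun i => if h : i < n then x ⟨i, h⟩ else 0

/-- For a random walk `Y` on `ℤ` with i.i.d. increments, the height process
`H_n = ∑_{k=0}^{n−1} 1{Y_k = min_{k≤j≤n} Y_j}` has, for each fixed `n`, the same distribution
as the number of weak ascending records `N_n = #{1 ≤ k ≤ n : Y_k = max_{0≤j≤k} Y_j}`. -/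
theorem height_process_eq_records_in_law
    {Ω : Type} [MeasurableSpace Ω] (P : Measure Ω) [IsProbabilityMeasure P]
    (ξ : ℕ → Ω → ℤ)
    (hmeas : ∀ i, Measurable (ξ i))
    (hindep : iIndepFun ξ P)
    (hident : ∀ i, Measure.map (ξ i) P = Measure.map (ξ 0) P)
    (Y : ℕ → Ω → ℤ) (hY : ∀ n ω, Y n ω = ∑ i ∈ Finset.range n, ξ i ω)
    (n : ℕ) :
    Measure.map (fun ω => ∑ k ∈ Finset.range n,
        @ite ℕ (∀ j ∈ Finset.Icc k n, Y k ω ≤ Y j ω) Finset.decidableDforallFinset 1 0) P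
      = Measure.map (fun ω => ∑ k ∈ Finset.Icc 1 n,
        @ite ℕ (∀ j ∈ Finset.Icc 0 k, Y j ω ≤ Y k ω) Finset.decidableDforallFinset 1 0) P := by
  have hmap : ∀ f : Fin n → ℕ, Function.Injective f →
      Measure.map (fun ω (i : Fin n) => ξ (f i) ω) P
        = Measure.pi (fun _ : Fin n => Measure.map (ξ 0) P) := by
    intro f hf
    have h1 := hindep.precomp hf
    have h2 := (iIndepFun_iff_map_fun_eq_pi_map
      (fun i => (hmeas (f i)).aemeasurable)).1 h1
    refine h2.trans ?_
    congr 1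
    funext i
    exact hident (f i)
  have hG : Measurable (fun x : Fin n → ℤ => recCount n (extZ n x)) := measurable_of_countable _
  have e1 : (fun ω => ∑ k ∈ Finset.range n,
        @ite ℕ (∀ j ∈ Finset.Icc k n, Y k ω ≤ Y j ω) Finset.decidableDforallFinset 1 0)
      = (fun x : Fin n → ℤ => recCount n (extZ n x)) ∘
        (fun ω (i : Fin n) => ξ (n - 1 - (i : ℕ)) ω) := by
    funext ω
    simp only [hY, Function.comp]
    rw [height_eq_rec n (fun i => ξ i ω)]
    exact recCount_congr _ _ _ fun i hi => by simp [extZ, hi]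
  have e2 : (fun ω => ∑ k ∈ Finset.Icc 1 n,
        @ite ℕ (∀ j ∈ Finset.Icc 0 k, Y j ω ≤ Y k ω) Finset.decidableDforallFinset 1 0)
      = (fun x : Fin n → ℤ => recCount n (extZ n x)) ∘
        (fun ω (i : Fin n) => ξ (i : ℕ) ω) := by
    funext ω
    simp only [hY, Function.comp]
    change recCount n (fun i => ξ i ω) = _
    exact recCount_congr _ _ _ fun i hi => by simp [extZ, hi]
  rw [e1, e2, ← Measure.map_map hG (measurable_pi_lambda _ fun i => hmeas _),
    ← Measure.map_map hG (measurable_pi_lambda _ fun i => hmeas _),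
    hmap (fun i => n - 1 - (i : ℕ)) (fun i j hij => by
      apply Fin.ext
      have := i.2
      have := j.2
      simp only at hij
      omega),
    hmap (fun i => (i : ℕ)) Fin.val_injective]
end

section
/- Let (Y_n)_{n≥0} be the left-continuous random walk with Y_0 = 0 and i.i.d. increments ξ_i satisfying ξ_1 ≥ −1 almost surely, E[ξ_1] = 0, E[ξ_1²] < ∞ and P(ξ_1 = 0) < 1, and let H_n := ∑_{k=0}^{n−1} 1{ Y_k = min_{k≤j≤n} Y_j } be the height process (H_0 := 0). Then almost surely max_{0≤i≤n} H_i ≤ n^{1/2+o(1)}; that is, almost surely, for every ε > 0, max_{0≤i≤n} H_i ≤ n^{1/2+ε} for all sufficiently large n. -/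
open MeasureTheory ProbabilityTheory
open scoped ENNReal

namespace HPU

/-- reflected (Lindley) walk -/
def D (x : ℕ → ℤ) : ℕ → ℤ
  | 0 => 0
  | n + 1 => max (D x n - x n) 0

/-- number of zeros of the reflected walk -/
def R (x : ℕ → ℤ) (n : ℕ) : ℕ := ∑ m ∈ Finset.range n, if D x (m + 1) = 0 then 1 else 0

lemma D_nonneg (x : ℕ → ℤ) (n : ℕ) : 0 ≤ D x n := by
  cases n <;> simp [D]

lemma D_congr {x y : ℕ → ℤ} {n : ℕ} (h : ∀ i < n, x i = y i) : D x n = D y n := by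
  induction n with
  | zero => rfl
  | succ n ih => simp only [D]; rw [ih (fun i hi => h i (by omega)), h n (by omega)]

lemma R_congr {x y : ℕ → ℤ} {n : ℕ} (h : ∀ i < n, x i = y i) : R x n = R y n := by
  unfold R
  refine Finset.sum_congr rfl fun m hm => ?_
  rw [D_congr (fun i hi => h i (by have := Finset.mem_range.1 hm; omega))]

lemma D_shift (x : ℕ → ℤ) (m i : ℕ) : D (fun l => x (m + l)) i ≤ D x (m + i) := by
  induction i with
  | zero => exact D_nonneg _ _
  | succ i ih => 
    show max (D (fun l => x (m + l)) i - x (m + i)) 0 ≤ max (D x (m + i) - x (m + i)) 0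
    omega

lemma R_succ (x : ℕ → ℤ) (n : ℕ) : R x (n + 1) = R x n + if D x (n + 1) = 0 then 1 else 0 := by
  simp only [R, Finset.sum_range_succ]

lemma R_mono (x : ℕ → ℤ) : Monotone (R x) := monotone_nat_of_le_succ fun n => by
  rw [R_succ]; omega

lemma R_add (x : ℕ → ℤ) (m i : ℕ) : R x (m + i) ≤ R x m + R (fun l => x (m + l)) i := by
  induction i with
  | zero => simp
  | succ i ih =>
    rw [← add_assoc, R_succ, R_succ]
    have h1 := D_shift x m (i + 1)
    have h2 := D_nonneg (fun l => x (m + l)) (i + 1)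
    have h3 : m + (i + 1) = m + i + 1 := rfl
    rw [h3] at h1
    split_ifs <;> omega

lemma R_split (x : ℕ → ℤ) (n a b : ℕ) (ha : 1 ≤ a) (h : a + b ≤ R x n) :
    ∃ m < n, (R x m < a ∧ a ≤ R x (m + 1)) ∧ b ≤ R (fun l => x (m + 1 + l)) n := by
  have hex : ∃ m, a ≤ R x m := ⟨n, by omega⟩
  classical
  obtain ⟨m, hm⟩ : ∃ m, Nat.find hex = m + 1 := by
    refine Nat.exists_eq_succ_of_ne_zero fun h0 => ?_
    have := Nat.find_spec hex
    rw [h0] at this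
    simp [R] at this; omega
  have h1 : a ≤ R x (m + 1) := hm ▸ Nat.find_spec hex
  have h2 : R x m < a := not_le.1 (Nat.find_min hex (by omega))
  have h3 : m + 1 ≤ n := hm ▸ Nat.find_min' hex (by omega)
  refine ⟨m, h3, ⟨h2, h1⟩, ?_⟩
  have h4 := R_add x (m + 1) (n - (m + 1))
  rw [Nat.add_sub_cancel' h3] at h4
  have h5 := R_mono (fun l => x (m + 1 + l)) (Nat.sub_le n (m + 1))
  have h6 := R_succ x m
  split_ifs at h6 <;> omega

lemma D_repr (x : ℕ → ℤ) (m : ℕ) : ∃ i ≤ m, D x m =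
    ∑ l ∈ Finset.range i, x l - ∑ l ∈ Finset.range m, x l := by
  induction m with
  | zero => exact ⟨0, le_rfl, by simp [D]⟩
  | succ m ih =>
    obtain ⟨i, hi, h⟩ := ih
    simp only [D]
    rcases le_total (D x m - x m) 0 with h0 | h0
    · exact ⟨m + 1, le_rfl, by rw [max_eq_right h0]; simp⟩
    · exact ⟨i, by omega, by rw [max_eq_left h0, h, Finset.sum_range_succ _ m]; ring⟩

/-- reversal of the first n indices -/
def rev (n i : ℕ) : ℕ := if i < n then n - 1 - i else i

lemma rev_inj (n : ℕ) : Function.Injective (rev n) := by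
  intro i j h
  unfold rev at h
  split_ifs at h <;> omega

lemma sum_rev (y : ℕ → ℤ) (n m : ℕ) (hm : m ≤ n) :
    ∑ l ∈ Finset.range m, y (rev n l) =
      ∑ l ∈ Finset.range n, y l - ∑ l ∈ Finset.range (n - m), y l := by
  induction m with
  | zero => simp
  | succ m ih =>
    rw [Finset.sum_range_succ, ih (by omega)]
    have h1 : n - m = n - (m + 1) + 1 := by omega
    have h2 : rev n m = n - (m + 1) := by unfold rev; split_ifs <;> omega
    rw [h1, Finset.sum_range_succ, h2]; ring

lemma height_le (y : ℕ → ℤ) (n : ℕ) :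
    (∑ k ∈ Finset.range n,
        @ite ℕ (∀ j ∈ Finset.Icc k n, ∑ i ∈ Finset.range k, y i ≤ ∑ i ∈ Finset.range j, y i)
          Finset.decidableDforallFinset 1 0) ≤ R (fun i => y (rev n i)) n := by
  rw [← Finset.sum_range_reflect, R]
  refine Finset.sum_le_sum fun m hm => ?_
  have hm := Finset.mem_range.1 hm
  split_ifs with h h' h'
  · exact le_rfl
  · exfalso
    apply h'
    obtain ⟨i, hi, hD⟩ := D_repr (fun i => y (rev n i)) (m + 1)
    have h0 := D_nonneg (fun i => y (rev n i)) (m + 1)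
    rw [sum_rev y n i (by omega), sum_rev y n (m + 1) (by omega)] at hD
    have := h (n - i) (Finset.mem_Icc.2 ⟨by omega, by omega⟩)
    have e : n - 1 - m = n - (m + 1) := by omega
    rw [e] at this
    omega
  · omega
  · omega

variable {Ω : Type} [MeasurableSpace Ω]

structure IID (P : Measure Ω) (X : Ω → ℤ) (η : ℕ → Ω → ℤ) : Prop where
  meas : ∀ i, Measurable (η i)
  indep : iIndepFun η P
  ident : ∀ i, IdentDistrib (η i) X P P

lemma IID.comp {P : Measure Ω} {X : Ω → ℤ} {η : ℕ → Ω → ℤ} (h : IID P X η) (g : ℕ → ℕ)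
    (hg : Function.Injective g) : IID P X (fun i => η (g i)) :=
  ⟨fun i => h.meas _, h.indep.precomp hg, fun i => h.ident _⟩

/-- extension by zero -/
def ext (m n : ℕ) (z : Finset.Ico m n → ℤ) (i : ℕ) : ℤ :=
  if h : m + i ∈ Finset.Ico m n then z ⟨m + i, h⟩ else 0

lemma fac {α : Type} (η : ℕ → Ω → ℤ) (m n : ℕ) (F : (ℕ → ℤ) → α)
    (hF : ∀ x y : ℕ → ℤ, (∀ i < n, x i = y i) → F x = F y) :
    (fun ω => F (fun i => η (m + i) ω)) =
      (fun z => F (ext m (m + n) z)) ∘ (fun ω (i : Finset.Ico m (m + n)) => η i ω) := by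
  funext ω
  refine hF _ _ fun i hi => ?_
  simp [ext, hi]

lemma meas_F {α : Type} [MeasurableSpace α] {η : ℕ → Ω → ℤ} (hη : ∀ i, Measurable (η i)) (n : ℕ)
    (F : (ℕ → ℤ) → α) (hF : ∀ x y : ℕ → ℤ, (∀ i < n, x i = y i) → F x = F y) :
    Measurable (fun ω => F (fun i => η i ω)) := by
  have := fac η 0 n F hF
  simp only [zero_add] at this
  rw [this]
  exact (Measurable.of_discrete).comp (measurable_pi_lambda _ fun i => hη _)

lemma indep_F {α β : Type} [MeasurableSpace α] [MeasurableSpace β] {P : Measure Ω}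
    {η : ℕ → Ω → ℤ} (hη : ∀ i, Measurable (η i)) (hi : iIndepFun η P) (m n : ℕ)
    (F : (ℕ → ℤ) → α) (hF : ∀ x y : ℕ → ℤ, (∀ i < m, x i = y i) → F x = F y)
    (G : (ℕ → ℤ) → β) (hG : ∀ x y : ℕ → ℤ, (∀ i < n, x i = y i) → G x = G y) :
    IndepFun (fun ω => F (fun i => η i ω)) (fun ω => G (fun i => η (m + i) ω)) P := by
  have h1 := fac η 0 m F hF
  have h2 := fac η m n G hG
  simp only [zero_add] at h1
  rw [h1, h2]
  refine IndepFun.comp (hi.indepFun_finset _ _ ?_ hη) Measurable.of_discrete Measurable.of_discrete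
  rw [Finset.disjoint_left]
  intro i; simp; omega

lemma tail_pow {P : Measure Ω} [IsProbabilityMeasure P] {X : Ω → ℤ} (n a : ℕ) (ha : 1 ≤ a) (p : ℝ)
    (hp : ∀ η, IID P X η → P.real {ω | a ≤ R (fun i => η i ω) n} ≤ p) (j : ℕ) :
    ∀ η, IID P X η → P.real {ω | j * a ≤ R (fun i => η i ω) n} ≤ p ^ j := by
  induction j with
  | zero => intro η h; simp
  | succ j ih =>
    intro η h
    have hp0 : 0 ≤ p := le_trans measureReal_nonneg (hp η h)
    let A : ℕ → Set Ω := fun m =>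
      {ω | R (fun i => η i ω) m < a ∧ a ≤ R (fun i => η i ω) (m + 1)}
    let B : ℕ → Set Ω := fun m => {ω | j * a ≤ R (fun i => η (m + 1 + i) ω) n}
    have hAm : ∀ m, MeasurableSet (A m) := fun m => by
      have := meas_F (α := Prop) h.meas (m + 1)
        (fun x => R x m < a ∧ a ≤ R x (m + 1)) (fun x y hxy => by
          rw [R_congr hxy, R_congr (n := m) (fun i hi => hxy i (by omega))])
      exact measurableSet_setOfPred.2 this
    have hsub : {ω | (j + 1) * a ≤ R (fun i => η i ω) n} ⊆ ⋃ m ∈ Finset.range n, A m ∩ B m := by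
      intro ω hω
      obtain ⟨m, hm, h1, h2⟩ := R_split (fun i => η i ω) n a (j * a) ha
        (by have : (j + 1) * a ≤ R (fun i => η i ω) n := hω
            linarith)
      simp only [Set.mem_iUnion]
      exact ⟨m, Finset.mem_range.2 hm, h1, h2⟩
    have hAB : ∀ m, P.real (A m ∩ B m) ≤ P.real (A m) * p ^ j := fun m => by
      have hind := indep_F (α := Prop) (β := Prop) h.meas h.indep (m + 1) n
        (fun x => R x m < a ∧ a ≤ R x (m + 1)) (fun x y hxy => by
          rw [R_congr hxy, R_congr (n := m) (fun i hi => hxy i (by omega))])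
        (fun x => j * a ≤ R x n) (fun x y hxy => by rw [R_congr hxy])
      have h2 := hind.measure_inter_preimage_eq_mul {True} {True} (by measurability) (by measurability)
      have e1 : A m = (fun ω => R (fun i => η i ω) m < a ∧ a ≤ R (fun i => η i ω) (m + 1)) ⁻¹' {True} := by
        ext ω; simp [A]
      have e2 : B m = (fun ω => j * a ≤ R (fun i => η (m + 1 + i) ω) n) ⁻¹' {True} := by
        ext ω; simp [B]
      rw [← e1, ← e2] at h2
      have h3 : P.real (A m ∩ B m) = P.real (A m) * P.real (B m) := by
        simp only [Measure.real, h2, ENNReal.toReal_mul]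
      rw [h3]
      exact mul_le_mul_of_nonneg_left
        (ih _ (h.comp (fun i => m + 1 + i) (fun i j hij => by simpa using hij))) measureReal_nonneg
    have hdisj : (↑(Finset.range n) : Set ℕ).PairwiseDisjoint A := by
      intro m _ m' _ hne
      refine Set.disjoint_left.2 fun ω h1 h2 => ?_
      simp only [A, Set.mem_ofPred_eq] at h1 h2
      rcases lt_or_gt_of_ne hne with hlt | hlt
      · have := R_mono (fun i => η i ω) (show m + 1 ≤ m' from hlt); omega
      · have := R_mono (fun i => η i ω) (show m' + 1 ≤ m from hlt); omega
    calc P.real {ω | (j + 1) * a ≤ R (fun i => η i ω) n}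
        ≤ P.real (⋃ m ∈ Finset.range n, A m ∩ B m) := measureReal_mono hsub (measure_ne_top _ _)
      _ ≤ ∑ m ∈ Finset.range n, P.real (A m ∩ B m) := measureReal_biUnion_finset_le _ _
      _ ≤ ∑ m ∈ Finset.range n, P.real (A m) * p ^ j := Finset.sum_le_sum fun m _ => hAB m
      _ = P.real (⋃ m ∈ Finset.range n, A m) * p ^ j := by
          rw [measureReal_biUnion_finset hdisj (fun m _ => hAm m), Finset.sum_mul]
      _ ≤ P.real {ω | a ≤ R (fun i => η i ω) n} * p ^ j := by
          refine mul_le_mul_of_nonneg_right (measureReal_mono ?_) (by positivity)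
          intro ω hω
          simp only [Set.mem_iUnion] at hω
          obtain ⟨m, hm, h1⟩ := hω
          exact h1.2.trans (R_mono _ (Finset.mem_range.1 hm))
      _ ≤ p * p ^ j := mul_le_mul_of_nonneg_right (hp η h) (by positivity)
      _ = p ^ (j + 1) := by ring

section exp
variable {P : Measure Ω} [IsProbabilityMeasure P] {X : Ω → ℤ} {η : ℕ → Ω → ℤ}

lemma D_meas (h : IID P X η) (n : ℕ) : Measurable (fun ω => ((D (fun i => η i ω) n : ℤ) : ℝ)) :=
  meas_F h.meas n (fun x => ((D x n : ℤ) : ℝ)) (fun x y hxy => by rw [D_congr hxy])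

lemma eta_ident (h : IID P X η) (n : ℕ) :
    IdentDistrib (fun ω => (η n ω : ℝ)) (fun ω => (X ω : ℝ)) P P :=
  (h.ident n).comp (u := fun k : ℤ => (k : ℝ)) Measurable.of_discrete

lemma eta_memLp (h : IID P X η) (hX : MemLp (fun ω => (X ω : ℝ)) 2 P) (n : ℕ) :
    MemLp (fun ω => (η n ω : ℝ)) 2 P := (eta_ident h n).memLp_iff.2 hX

lemma D_memLp (h : IID P X η) (hX : MemLp (fun ω => (X ω : ℝ)) 2 P) (n : ℕ) :
    MemLp (fun ω => ((D (fun i => η i ω) n : ℤ) : ℝ)) 2 P := by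
  induction n with
  | zero => simp [D]
  | succ n ih =>
    refine (ih.sub (eta_memLp h hX n)).mono (D_meas h (n + 1)).aestronglyMeasurable ?_
    refine Filter.Eventually.of_forall fun ω => ?_
    simp only [D, Pi.sub_apply, Real.norm_eq_abs]
    push_cast
    rcases le_total ((D (fun i => η i ω) n : ℝ) - η n ω) 0 with h0 | h0
    · rw [max_eq_right h0]; simp
    · rw [max_eq_left h0]

lemma D_indep (h : IID P X η) (n : ℕ) (f g : ℤ → ℝ) :
    IndepFun (fun ω => f (D (fun i => η i ω) n)) (fun ω => g (η n ω)) P :=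
  indep_F h.meas h.indep n 1 (fun x => f (D x n)) (fun x y hxy => by rw [D_congr hxy])
    (fun x => g (x 0)) (fun x y hxy => by rw [hxy 0 (by omega)])

lemma D_sq (h : IID P X η) (hX : MemLp (fun ω => (X ω : ℝ)) 2 P)
    (h0 : ∫ ω, (X ω : ℝ) ∂P = 0) (n : ℕ) :
    ∫ ω, ((D (fun i => η i ω) n : ℤ) : ℝ) ^ 2 ∂P ≤ n * ∫ ω, (X ω : ℝ) ^ 2 ∂P := by
  induction n with
  | zero => simp [D]
  | succ n ih =>
    have hD := D_memLp h hX n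
    have hE := eta_memLp h hX n
    have e1 : ∫ ω, (η n ω : ℝ) ∂P = 0 := by rw [(eta_ident h n).integral_eq, h0]
    have e2 : ∫ ω, (η n ω : ℝ) ^ 2 ∂P = ∫ ω, (X ω : ℝ) ^ 2 ∂P :=
      ((eta_ident h n).comp (u := fun k : ℝ => k ^ 2) (by fun_prop)).integral_eq
    have e3 : ∫ ω, ((D (fun i => η i ω) n : ℤ) : ℝ) * (η n ω : ℝ) ∂P = 0 := by
      rw [(D_indep h n (fun k => (k : ℝ)) (fun k => (k : ℝ))).integral_fun_mul_eq_mul_integral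
        hD.1 hE.1, e1, mul_zero]
    have i3 : Integrable (fun ω => ((D (fun i => η i ω) n : ℤ) : ℝ) * (η n ω : ℝ)) P :=
      hD.integrable_mul hE
    calc ∫ ω, ((D (fun i => η i ω) (n + 1) : ℤ) : ℝ) ^ 2 ∂P
        ≤ ∫ ω, (((D (fun i => η i ω) n : ℤ) : ℝ) ^ 2
            - 2 * (((D (fun i => η i ω) n : ℤ) : ℝ) * (η n ω : ℝ)) + (η n ω : ℝ) ^ 2) ∂P := by
          refine integral_mono (D_memLp h hX (n + 1)).integrable_sq
            ((hD.integrable_sq.sub (i3.const_mul 2)).add hE.integrable_sq) fun ω => ?_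
          simp only [D]
          push_cast
          rcases le_total ((D (fun i => η i ω) n : ℝ) - η n ω) 0 with h0 | h0
          · rw [max_eq_right h0]
            nlinarith [sq_nonneg ((D (fun i => η i ω) n : ℝ) - η n ω)]
          · rw [max_eq_left h0]; nlinarith
      _ = ∫ ω, ((D (fun i => η i ω) n : ℤ) : ℝ) ^ 2 ∂P + ∫ ω, (X ω : ℝ) ^ 2 ∂P := by
          rw [integral_add (f := fun ω => ((D (fun i => η i ω) n : ℤ) : ℝ) ^ 2
            - 2 * (((D (fun i => η i ω) n : ℤ) : ℝ) * (η n ω : ℝ)))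
            (hD.integrable_sq.sub (i3.const_mul 2)) hE.integrable_sq,
            integral_sub hD.integrable_sq (i3.const_mul 2), integral_const_mul, e3, e2]
          ring
      _ ≤ _ := by push_cast; linarith

lemma D_int (h : IID P X η) (hX : MemLp (fun ω => (X ω : ℝ)) 2 P)
    (h0 : ∫ ω, (X ω : ℝ) ∂P = 0) (n : ℕ) :
    ∫ ω, ((D (fun i => η i ω) n : ℤ) : ℝ) ∂P ≤ √(n * ∫ ω, (X ω : ℝ) ^ 2 ∂P) := by
  refine Real.le_sqrt_of_sq_le ?_
  have h1 := variance_nonneg (fun ω => ((D (fun i => η i ω) n : ℤ) : ℝ)) P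
  rw [variance_eq_sub (D_memLp h hX n)] at h1
  have h2 := D_sq h hX h0 n
  simp only [Pi.pow_apply] at h1
  linarith

/-- indicator of zero -/
noncomputable def z (k : ℤ) : ℝ := if k = 0 then 1 else 0

lemma z_int (h : IID P X η) (n : ℕ) : Integrable (fun ω => z (D (fun i => η i ω) n)) P := by
  refine Integrable.of_bound (C := 1) (meas_F h.meas n (fun x => z (D x n))
    (fun x y hxy => by rw [D_congr hxy])).aestronglyMeasurable (Filter.Eventually.of_forall fun ω => ?_)
  simp only [z]; split_ifs <;> simp

lemma D_drift (h : IID P X η) (hX : MemLp (fun ω => (X ω : ℝ)) 2 P)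
    (h0 : ∫ ω, (X ω : ℝ) ∂P = 0) (n : ℕ) :
    (∫ ω, z (D (fun i => η i ω) n) ∂P) * ∫ ω, max (X ω : ℝ) 0 ∂P ≤
      ∫ ω, ((D (fun i => η i ω) (n + 1) : ℤ) : ℝ) ∂P - ∫ ω, ((D (fun i => η i ω) n : ℤ) : ℝ) ∂P := by
  have hD := (D_memLp h hX n).integrable (by norm_num)
  have hD' := (D_memLp h hX (n + 1)).integrable (by norm_num)
  have hE := (eta_memLp h hX n).integrable (by norm_num)
  have e1 : ∫ ω, (η n ω : ℝ) ∂P = 0 := by rw [(eta_ident h n).integral_eq, h0]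
  have e2 : ∫ ω, max (η n ω : ℝ) 0 ∂P = ∫ ω, max (X ω : ℝ) 0 ∂P :=
    ((eta_ident h n).comp (u := fun k : ℝ => max k 0) (by fun_prop)).integral_eq
  have hI := (D_indep h n z (fun k => max (k : ℝ) 0))
  have hP : Integrable (fun ω => max (η n ω : ℝ) 0) P := hE.pos_part
  rw [← e2, ← hI.integral_fun_mul_eq_mul_integral (z_int h n).1 hP.1]
  have e3 : ∫ ω, ((D (fun i => η i ω) (n + 1) : ℤ) : ℝ) ∂P - ∫ ω, ((D (fun i => η i ω) n : ℤ) : ℝ) ∂P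
      = ∫ ω, (((D (fun i => η i ω) (n + 1) : ℤ) : ℝ) - ((D (fun i => η i ω) n : ℤ) : ℝ)
        + (η n ω : ℝ)) ∂P := by
    rw [integral_add (f := fun ω => ((D (fun i => η i ω) (n + 1) : ℤ) : ℝ)
      - ((D (fun i => η i ω) n : ℤ) : ℝ)) (hD'.sub hD) hE, integral_sub hD' hD, e1, add_zero]
  rw [e3]
  refine integral_mono (hI.integrable_mul (z_int h n) hP) ((hD'.sub hD).add hE) fun ω => ?_
  simp only [D, z, Pi.mul_apply]
  push_cast
  split_ifs with hz
  · rw [hz]; simp only [Int.cast_zero]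
    rcases le_total (η n ω : ℝ) 0 with h0 | h0
    · rw [max_eq_right h0, max_eq_left (by linarith)]; linarith
    · rw [max_eq_left h0, max_eq_right (by linarith)]; linarith
  · have := le_max_left ((D (fun i => η i ω) n : ℝ) - η n ω) 0
    linarith

lemma R_eq (x : ℕ → ℤ) (n : ℕ) : (R x n : ℝ) = ∑ m ∈ Finset.range n, z (D x (m + 1)) := by
  simp [R, z]

lemma R_int (h : IID P X η) (n : ℕ) : Integrable (fun ω => (R (fun i => η i ω) n : ℝ)) P := by
  simp only [R_eq]
  exact integrable_finsetSum _ fun m _ => z_int h (m + 1)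

lemma ER (h : IID P X η) (hX : MemLp (fun ω => (X ω : ℝ)) 2 P)
    (h0 : ∫ ω, (X ω : ℝ) ∂P = 0) (n : ℕ) :
    (∫ ω, (R (fun i => η i ω) n : ℝ) ∂P) * ∫ ω, max (X ω : ℝ) 0 ∂P ≤
      √((n + 1 : ℕ) * ∫ ω, (X ω : ℝ) ^ 2 ∂P) := by
  refine le_trans ?_ (D_int h hX h0 (n + 1))
  have hc : 0 ≤ ∫ ω, max (X ω : ℝ) 0 ∂P := integral_nonneg fun ω => le_max_right _ _
  simp only [R_eq]
  rw [integral_finsetSum _ fun m _ => z_int h (m + 1), Finset.sum_mul]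
  have h2 : 0 ≤ ∫ ω, ((D (fun i => η i ω) 1 : ℤ) : ℝ) ∂P :=
    integral_nonneg fun ω => Int.cast_nonneg (D_nonneg _ _)
  have h3 := Finset.sum_range_sub (fun m => ∫ ω, ((D (fun i => η i ω) (m + 1) : ℤ) : ℝ) ∂P) n
  have h4 := Finset.sum_le_sum fun m (_ : m ∈ Finset.range n) => D_drift h hX h0 (m + 1)
  simp only [zero_add] at h3
  linarith

lemma c_pos (hXm : Measurable X) (hX : MemLp (fun ω => (X ω : ℝ)) 2 P)
    (h0 : ∫ ω, (X ω : ℝ) ∂P = 0) (hnd : P {ω | X ω = 0} < 1) :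
    0 < ∫ ω, max (X ω : ℝ) 0 ∂P := by
  have hXi := hX.integrable (by norm_num)
  refine lt_of_le_of_ne (integral_nonneg fun ω => le_max_right _ _) fun he => ?_
  have h1 := (integral_eq_zero_iff_of_nonneg (fun ω => le_max_right (X ω : ℝ) 0)
    hXi.pos_part).1 he.symm
  have h2 : 0 ≤ᵐ[P] fun ω => -(X ω : ℝ) := by
    filter_upwards [h1] with ω hω
    have := le_max_left (X ω : ℝ) 0
    simp only [Pi.zero_apply] at hω ⊢
    linarith
  have h3 := (integral_eq_zero_iff_of_nonneg_ae h2 hXi.neg).1 (by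
    show ∫ ω, -(X ω : ℝ) ∂P = 0
    rw [integral_neg, h0, neg_zero])
  have h4 : ∀ᵐ ω ∂P, ω ∈ {ω | X ω = 0} := by
    filter_upwards [h3] with ω hω
    simpa using hω
  refine hnd.ne ?_
  have h5 : {ω | X ω = 0} =ᵐ[P] (Set.univ : Set Ω) := Filter.eventuallyEq_univ.2 h4
  rw [measure_congr h5, measure_univ]

end exp

section main
variable {P : Measure Ω} [IsProbabilityMeasure P] {X : Ω → ℤ}

lemma tail_one (hX : MemLp (fun ω => (X ω : ℝ)) 2 P)
    (h0 : ∫ ω, (X ω : ℝ) ∂P = 0) (hc : 0 < ∫ ω, max (X ω : ℝ) 0 ∂P) :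
    ∃ K : ℝ, ∀ δ : ℝ, ∀ n : ℕ, 1 ≤ n → ∀ η, IID P X η →
      P.real {ω | ⌈(n : ℝ) ^ ((1 : ℝ) / 2 + δ)⌉₊ ≤ R (fun i => η i ω) n} ≤ K * (n : ℝ) ^ (-δ) := by
  refine ⟨√(2 * ∫ ω, (X ω : ℝ) ^ 2 ∂P) / ∫ ω, max (X ω : ℝ) 0 ∂P, fun δ n hn η h => ?_⟩
  have hV : 0 ≤ ∫ ω, (X ω : ℝ) ^ 2 ∂P := integral_nonneg fun ω => sq_nonneg _
  have hn' : (1 : ℝ) ≤ n := by exact_mod_cast hn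
  have h1 := ER h hX h0 n
  have h2 : √((n + 1 : ℕ) * ∫ ω, (X ω : ℝ) ^ 2 ∂P) ≤ √(2 * ∫ ω, (X ω : ℝ) ^ 2 ∂P) * √n := by
    rw [← Real.sqrt_mul (by positivity)]
    apply Real.sqrt_le_sqrt
    push_cast
    nlinarith
  have h3 := mul_meas_ge_le_integral_of_nonneg (μ := P)
    (f := fun ω => (R (fun i => η i ω) n : ℝ)) (Filter.Eventually.of_forall fun ω => Nat.cast_nonneg _)
    (R_int h n) ((n : ℝ) ^ ((1 : ℝ) / 2 + δ))
  have hpos : 0 < (n : ℝ) ^ ((1 : ℝ) / 2 + δ) := by positivity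
  have h4 : {ω | ⌈(n : ℝ) ^ ((1 : ℝ) / 2 + δ)⌉₊ ≤ R (fun i => η i ω) n}
      = {ω | (n : ℝ) ^ ((1 : ℝ) / 2 + δ) ≤ (R (fun i => η i ω) n : ℝ)} := by
    ext ω
    exact Nat.ceil_le
  rw [h4]
  have h5 : (n : ℝ) ^ (-δ) = √n / (n : ℝ) ^ ((1 : ℝ) / 2 + δ) := by
    rw [Real.sqrt_eq_rpow, ← Real.rpow_sub (by positivity)]
    congr 1; ring
  rw [h5, div_mul_div_comm, le_div_iff₀ (by positivity)]
  have h6 := mul_le_mul_of_nonneg_right h3 hc.le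
  linarith

lemma one_eps (hX : MemLp (fun ω => (X ω : ℝ)) 2 P)
    (h0 : ∫ ω, (X ω : ℝ) ∂P = 0) (hc : 0 < ∫ ω, max (X ω : ℝ) 0 ∂P)
    (ξ : ℕ → Ω → ℤ) (hξ : IID P X ξ) (ε : ℝ) (hε : 0 < ε) :
    ∀ᵐ ω ∂P, ∀ᶠ n : ℕ in Filter.atTop,
      (R (fun i => ξ (rev n i) ω) n : ℝ) ≤ (n : ℝ) ^ ((1 : ℝ) / 2 + ε) := by
  obtain ⟨K, hK⟩ := tail_one hX h0 hc
  obtain ⟨j, hj⟩ := exists_nat_gt (1 / (ε / 2))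
  have hj' : 1 < (ε / 2) * j := by
    rw [div_lt_iff₀ (by positivity)] at hj; linarith
  let s : ℕ → Set Ω := fun n => {ω | 1 ≤ n ∧
    j * ⌈(n : ℝ) ^ ((1 : ℝ) / 2 + ε / 2)⌉₊ ≤ R (fun i => ξ (rev n i) ω) n}
  have hs : ∀ n, P (s n) ≤ ENNReal.ofReal (K ^ j * (n : ℝ) ^ (-(ε / 2 * j))) := by
    intro n
    rcases Nat.eq_zero_or_pos n with rfl | hn
    · simp [s]
    · have h1 := tail_pow n ⌈(n : ℝ) ^ ((1 : ℝ) / 2 + ε / 2)⌉₊ (Nat.ceil_pos.2 (by positivity))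
        (K * (n : ℝ) ^ (-(ε / 2))) (hK (ε / 2) n hn) j _ (hξ.comp _ (rev_inj n))
      have h2 : s n = {ω | j * ⌈(n : ℝ) ^ ((1 : ℝ) / 2 + ε / 2)⌉₊ ≤ R (fun i => ξ (rev n i) ω) n} := by
        ext ω
        exact ⟨fun h => h.2, fun h => ⟨hn, h⟩⟩
      rw [← h2, mul_pow, ← Real.rpow_natCast ((n : ℝ) ^ (-(ε / 2))) j,
        ← Real.rpow_mul (by positivity), neg_mul] at h1
      rw [← ofReal_measureReal]
      exact ENNReal.ofReal_le_ofReal h1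
  have hsum : ∑' n, P (s n) ≠ ∞ := by
    refine ne_top_of_le_ne_top ?_ (ENNReal.tsum_le_tsum hs)
    refine Summable.tsum_ofReal_ne_top ?_
    exact (Real.summable_nat_rpow.2 (by linarith)).mul_left _
  have hlarge : ∀ᶠ n : ℕ in Filter.atTop, (2 * j : ℝ) ≤ (n : ℝ) ^ (ε / 2) :=
    ((tendsto_rpow_atTop (by positivity : 0 < ε / 2)).comp
      tendsto_natCast_atTop_atTop).eventually_ge_atTop _
  filter_upwards [ae_eventually_notMem hsum] with ω hω
  filter_upwards [hω, hlarge, Filter.eventually_ge_atTop 1] with n h1 h2 h3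
  have h4 : R (fun i => ξ (rev n i) ω) n < j * ⌈(n : ℝ) ^ ((1 : ℝ) / 2 + ε / 2)⌉₊ := by
    by_contra hcon
    exact h1 ⟨h3, not_lt.1 hcon⟩
  have h5 : (R (fun i => ξ (rev n i) ω) n : ℝ) ≤ j * (⌈(n : ℝ) ^ ((1 : ℝ) / 2 + ε / 2)⌉₊ : ℝ) := by
    exact_mod_cast h4.le
  have hn' : (1 : ℝ) ≤ n := by exact_mod_cast h3
  have h6 := Nat.ceil_lt_add_one (show 0 ≤ (n : ℝ) ^ ((1 : ℝ) / 2 + ε / 2) by positivity)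
  have h7 : 1 ≤ (n : ℝ) ^ ((1 : ℝ) / 2 + ε / 2) := Real.one_le_rpow hn' (by positivity)
  have h8 : (n : ℝ) ^ ((1 : ℝ) / 2 + ε) = (n : ℝ) ^ (ε / 2) * (n : ℝ) ^ ((1 : ℝ) / 2 + ε / 2) := by
    rw [← Real.rpow_add (by positivity)]
    congr 1; ring
  rw [h8]
  calc (R (fun i => ξ (rev n i) ω) n : ℝ)
      ≤ j * (2 * (n : ℝ) ^ ((1 : ℝ) / 2 + ε / 2)) :=
        h5.trans (mul_le_mul_of_nonneg_left (by linarith) (Nat.cast_nonneg _))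
    _ = 2 * j * (n : ℝ) ^ ((1 : ℝ) / 2 + ε / 2) := by ring
    _ ≤ _ := mul_le_mul_of_nonneg_right h2 (by positivity)

lemma sup_ev (h : ℕ → ℕ) (p : ℝ) (hp : 0 < p) (H : ∀ᶠ n : ℕ in Filter.atTop, (h n : ℝ) ≤ (n : ℝ) ^ p) :
    ∀ᶠ n : ℕ in Filter.atTop, (((Finset.range (n + 1)).sup h : ℕ) : ℝ) ≤ (n : ℝ) ^ p := by
  obtain ⟨N, hN⟩ := Filter.eventually_atTop.1 H
  have hl : ∀ᶠ n : ℕ in Filter.atTop, (((Finset.range N).sup h : ℕ) : ℝ) ≤ (n : ℝ) ^ p :=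
    ((tendsto_rpow_atTop hp).comp tendsto_natCast_atTop_atTop).eventually_ge_atTop _
  filter_upwards [hl] with n hn
  have : (Finset.range (n + 1)).sup h ≤ ⌊(n : ℝ) ^ p⌋₊ := by
    refine Finset.sup_le fun i hi => Nat.le_floor ?_
    rcases lt_or_ge i N with hiN | hiN
    · refine le_trans ?_ hn
      exact_mod_cast Finset.le_sup (f := h) (Finset.mem_range.2 hiN)
    · refine (hN i hiN).trans (Real.rpow_le_rpow (by positivity) ?_ hp.le)
      exact_mod_cast Nat.lt_succ_iff.1 (Finset.mem_range.1 hi)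
  exact (Nat.le_floor_iff (by positivity)).1 this

end main

end HPU

/-- For a left-continuous random walk `Y` on `ℤ` with centered i.i.d.
increments `ξ_i ≥ −1` having finite second moment and `P(ξ_1 = 0) < 1`, the height process
`H_n = ∑_{k=0}^{n−1} 1{Y_k = min_{k≤j≤n} Y_j}` satisfies, almost surely,
`max_{0≤i≤n} H_i ≤ n^{1/2+o(1)}`. -/
theorem height_process_upper_bound
    {Ω : Type} [MeasurableSpace Ω] (P : Measure Ω) [IsProbabilityMeasure P]
    (ξ : ℕ → Ω → ℤ)
    (hmeas : ∀ i, Measurable (ξ i))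
    (hindep : iIndepFun ξ P)
    (hident : ∀ i, Measure.map (ξ i) P = Measure.map (ξ 0) P)
    (hge : ∀ᵐ ω ∂P, -1 ≤ ξ 0 ω)
    (hmean : ∫ ω, (ξ 0 ω : ℝ) ∂P = 0)
    (hmom : Integrable (fun ω => ((ξ 0 ω : ℝ)) ^ 2) P)
    (hnd : P {ω | ξ 0 ω = 0} < 1)
    (Y : ℕ → Ω → ℤ) (hY : ∀ n ω, Y n ω = ∑ i ∈ Finset.range n, ξ i ω)
    (H : ℕ → Ω → ℕ)
    (hH : ∀ n ω, H n ω = ∑ k ∈ Finset.range n,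
        @ite ℕ (∀ j ∈ Finset.Icc k n, Y k ω ≤ Y j ω) Finset.decidableDforallFinset 1 0) :
    ∀ᵐ ω ∂P, ∀ ε : ℝ, 0 < ε → ∀ᶠ n : ℕ in Filter.atTop,
      (((Finset.range (n + 1)).sup fun i => H i ω : ℕ) : ℝ) ≤
        (n : ℝ) ^ ((1 : ℝ) / 2 + ε) := by
  have hX : MemLp (fun ω => (ξ 0 ω : ℝ)) 2 P :=
    (memLp_two_iff_integrable_sq
      ((Measurable.of_discrete (f := fun k : ℤ => (k : ℝ))).comp (hmeas 0)).aestronglyMeasurable).2 hmom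
  have hc := HPU.c_pos (hmeas 0) hX hmean hnd
  have hiid : HPU.IID P (ξ 0) ξ :=
    ⟨hmeas, hindep, fun i => ⟨(hmeas i).aemeasurable, (hmeas 0).aemeasurable, hident i⟩⟩
  have hle : ∀ n ω, H n ω ≤ HPU.R (fun i => ξ (HPU.rev n i) ω) n := by
    intro n ω
    rw [hH]
    simp only [hY]
    exact HPU.height_le (fun i => ξ i ω) n
  have hall : ∀ᵐ ω ∂P, ∀ k : ℕ, ∀ᶠ n : ℕ in Filter.atTop,
      (HPU.R (fun i => ξ (HPU.rev n i) ω) n : ℝ) ≤ (n : ℝ) ^ ((1 : ℝ) / 2 + 1 / ((k : ℝ) + 1)) :=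
    ae_all_iff.2 fun k => HPU.one_eps hX hmean hc ξ hiid _ (by positivity)
  filter_upwards [hall] with ω hω ε hε
  obtain ⟨k, hk⟩ := exists_nat_one_div_lt hε
  refine HPU.sup_ev (fun i => H i ω) _ (by positivity) ?_
  filter_upwards [hω k, Filter.eventually_ge_atTop 1] with n h1 h2
  have h3 : (H n ω : ℝ) ≤ HPU.R (fun i => ξ (HPU.rev n i) ω) n := by exact_mod_cast hle n ω
  exact h3.trans (h1.trans (Real.rpow_le_rpow_of_exponent_le (by exact_mod_cast h2) (by linarith)))
end
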